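/- Let p ≥ 2, β > 0, and let q satisfy 1/p + 1/q = 1. Let μ_p be the probability measure on ℍ = ℝ³ with density e^{−β d^p(x)} / ∫_{ℝ³} e^{−β d^p(y)} dy with respect to Lebesgue measure, where d is the Carnot–Carathéodory distance to the identity. Then μ_p satisfies an (LS_q) inequality: there exists c > 0 such that μ_p(|f|^q log(|f|^q / μ_p(|f|^q))) ≤ c μ_p(|∇f|^q) for all smooth f:ℍ→ℝ. -/

import Mathlib

open MeasureTheory Real Filter

noncomputable section

/-- The underlying space of the Heisenberg group: `ℝ³`. -/
abbrev Heis : Type := ℝ × ℝ × ℝ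

/-- The Heisenberg group multiplication. -/
def Hmul (x y : Heis) : Heis :=
  (x.1 + y.1, x.2.1 + y.2.1,
    x.2.2 + y.2.2 + (x.1 * y.2.1 - x.2.1 * y.1) / 2)

/-- The identity element of the Heisenberg group. -/
def He : Heis := ((0 : ℝ), (0 : ℝ), (0 : ℝ))

/-- The left-invariant vector field `X₁ = ∂₁ - (x₂/2) ∂₃` acting on functions. -/
def X1 (f : Heis → ℝ) (x : Heis) : ℝ :=
  fderiv ℝ f x (1, 0, 0) - x.2.1 / 2 * fderiv ℝ f x (0, 0, 1)

/-- The left-invariant vector field `X₂ = ∂₂ + (x₁/2) ∂₃` acting on functions. -/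
def X2 (f : Heis → ℝ) (x : Heis) : ℝ :=
  fderiv ℝ f x (0, 1, 0) + x.1 / 2 * fderiv ℝ f x (0, 0, 1)

/-- The vector field `X₃ = ∂₃` acting on functions. -/
def X3 (f : Heis → ℝ) (x : Heis) : ℝ := fderiv ℝ f x (0, 0, 1)

/-- The length `|∇f|` of the sub-gradient `∇f = (X₁ f, X₂ f)`. -/
def gradLen (f : Heis → ℝ) (x : Heis) : ℝ :=
  Real.sqrt ((X1 f x) ^ 2 + (X2 f x) ^ 2)

/-- The sub-Laplacian `Δ = X₁² + X₂²`. -/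
def subLap (f : Heis → ℝ) (x : Heis) : ℝ := X1 (X1 f) x + X2 (X2 f) x

/-- An admissible (horizontal Lipschitz) path from `x` to `y` in the Heisenberg group:
`γ'(s) = a₁(s) X₁(γ(s)) + a₂(s) X₂(γ(s))` almost everywhere on `[0,1]`. -/
structure AdmissiblePath (x y : Heis) where
  γ : ℝ → Heis
  a1 : ℝ → ℝ
  a2 : ℝ → ℝ
  lipschitz : ∃ K : NNReal, LipschitzOnWith K γ (Set.Icc 0 1)
  meas1 : Measurable a1
  meas2 : Measurable a2
  start : γ 0 = x
  endpoint : γ 1 = y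
  admissible : ∀ᵐ s ∂(volume.restrict (Set.Icc (0:ℝ) 1)),
    HasDerivAt γ (a1 s • (((1 : ℝ), (0 : ℝ), -(γ s).2.1 / 2) : Heis)
      + a2 s • (((0 : ℝ), (1 : ℝ), (γ s).1 / 2) : Heis)) s

/-- The length of an admissible path. -/
def pathLength {x y : Heis} (p : AdmissiblePath x y) : ℝ :=
  ∫ s in Set.Icc (0:ℝ) 1, Real.sqrt (p.a1 s ^ 2 + p.a2 s ^ 2)

/-- The Carnot–Carathéodory distance on the Heisenberg group. -/
def ccDist (x y : Heis) : ℝ :=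
  sInf {l : ℝ | ∃ p : AdmissiblePath x y, l = pathLength p}

/-- The Carnot–Carathéodory distance to the identity `e`. -/
def ccNorm (x : Heis) : ℝ := ccDist x He

/-- The dilations `δ_λ(x) = (λx₁, λx₂, λ²x₃)`. -/
def dil (lam : ℝ) (x : Heis) : Heis := (lam * x.1, lam * x.2.1, lam ^ 2 * x.2.2)

end

noncomputable section

/-- The probability measure `μ_p(dx) = e^{-β d^p(x)} dx / ∫ e^{-β d^p}` on `ℍ`. -/
def muP (p β : ℝ) : Measure Heis :=
  (volume : Measure Heis).withDensity
    (fun x => ENNReal.ofReal (Real.exp (-β * ccNorm x ^ p) /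
      ∫ y : Heis, Real.exp (-β * ccNorm y ^ p)))

end

open MeasureTheory Real Filter
noncomputable section

/-- The homogeneous box of size `r`. -/
def hbox (r : ℝ) : Set Heis := {h | |h.1| ≤ r ∧ |h.2.1| ≤ r ∧ |h.2.2| ≤ r ^ 2}

/-- A horizontal vector viewed as a group element. -/
def hor (a b : ℝ) : Heis := (a, b, 0)

lemma Hmul_assoc (x y z : Heis) : Hmul (Hmul x y) z = Hmul x (Hmul y z) := by
  simp only [Hmul, Prod.mk.injEq]
  refine ⟨by ring, by ring, by ring⟩

lemma Hmul_neg_cancel (x y : Heis) : Hmul (-x) (Hmul x y) = y := by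
  obtain ⟨a, b, c⟩ := x
  obtain ⟨d, e, f⟩ := y
  simp only [Hmul, Prod.mk.injEq, Prod.fst_neg, Prod.snd_neg]
  refine ⟨by ring, by ring, by ring⟩

lemma Hmul_cancel_neg (x y : Heis) : Hmul x (Hmul (-x) y) = y := by
  obtain ⟨a, b, c⟩ := x
  obtain ⟨d, e, f⟩ := y
  simp only [Hmul, Prod.mk.injEq, Prod.fst_neg, Prod.snd_neg]
  refine ⟨by ring, by ring, by ring⟩

lemma Hmul_right_neg (x h : Heis) : Hmul (Hmul x h) (-h) = x := by
  obtain ⟨a, b, c⟩ := x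
  obtain ⟨d, e, f⟩ := h
  simp only [Hmul, Prod.mk.injEq, Prod.fst_neg, Prod.snd_neg]
  refine ⟨by ring, by ring, by ring⟩

lemma Hmul_He (x : Heis) : Hmul x He = x := by
  obtain ⟨a, b, c⟩ := x
  simp [Hmul, He]

lemma He_Hmul (x : Heis) : Hmul He x = x := by
  obtain ⟨a, b, c⟩ := x
  simp [Hmul, He]

lemma hbox_neg {r : ℝ} {h : Heis} (hh : h ∈ hbox r) : -h ∈ hbox r := by
  simpa [hbox] using hh

lemma hbox_mono {r s : ℝ} (hr : 0 ≤ r) (h : r ≤ s) : hbox r ⊆ hbox s := by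
  rintro x ⟨h1, h2, h3⟩
  refine ⟨h1.trans h, h2.trans h, h3.trans ?_⟩
  gcongr

lemma hbox_mul {a b : ℝ} {h k : Heis} (ha : h ∈ hbox a) (hb : k ∈ hbox b) :
    Hmul h k ∈ hbox (a + b) := by
  obtain ⟨h1, h2, h3⟩ := ha
  obtain ⟨k1, k2, k3⟩ := hb
  have a0 : 0 ≤ a := (abs_nonneg _).trans h1
  have b0 : 0 ≤ b := (abs_nonneg _).trans k1
  refine ⟨(abs_add_le _ _).trans (add_le_add h1 k1), (abs_add_le _ _).trans (add_le_add h2 k2), ?_⟩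
  have e1 : |h.1 * k.2.1| ≤ a * b := by rw [abs_mul]; gcongr
  have e2 : |h.2.1 * k.1| ≤ a * b := by rw [abs_mul]; gcongr
  simp only [Hmul]
  rw [abs_le] at *
  constructor <;> nlinarith

lemma hor_mem {a b r : ℝ} (ha : |a| ≤ r) (hb : |b| ≤ r) : hor a b ∈ hbox r := by
  refine ⟨ha, hb, ?_⟩
  simp [hor]; positivity

/-- Every element of the box is a product of five horizontal elements. -/
lemma hbox_decomp {r : ℝ} (hr : 0 < r) {h : Heis} (hh : h ∈ hbox r) :
    ∃ a b : Fin 5 → ℝ, (∀ i, |a i| ≤ r) ∧ (∀ i, |b i| ≤ r) ∧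
      ∀ x, Hmul x h = Hmul (Hmul (Hmul (Hmul (Hmul x (hor (a 0) (b 0))) (hor (a 1) (b 1)))
        (hor (a 2) (b 2))) (hor (a 3) (b 3))) (hor (a 4) (b 4)) := by
  obtain ⟨h1, h2, h3⟩ := hh
  have ht : |h.2.2 / r| ≤ r := by
    rw [abs_div, abs_of_pos hr, div_le_iff₀ hr]; nlinarith
  refine ⟨![h.1, r, 0, -r, 0], ![h.2.1, 0, h.2.2 / r, 0, -(h.2.2 / r)], ?_, ?_, ?_⟩
  · intro i; fin_cases i <;> simp [h1, hr.le, abs_of_pos hr]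
  · intro i; fin_cases i <;> simp [h2, hr.le, ht, abs_neg]
    all_goals simpa [abs_div] using ht
  · intro x
    simp only [Hmul, hor, Prod.mk.injEq]
    simp
    field_simp
    ring

/-- Right translations preserve Lebesgue measure. -/
lemma mp_right (k : Heis) : MeasurePreserving (fun x => Hmul x k) (volume : Measure Heis) volume := by
  have h2 : ∀ c d : ℝ, MeasurePreserving
      (fun y : ℝ × ℝ => (y.1 + k.2.1, y.2 + (k.2.2 + (c * k.2.1 - y.1 * k.1) / 2 + d)))
      (volume : Measure (ℝ × ℝ)) volume := by
    intro c d
    refine (measurePreserving_add_right volume k.2.1).skew_product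
      (g := fun y1 y2 => y2 + (k.2.2 + (c * k.2.1 - y1 * k.1) / 2 + d)) (by fun_prop) ?_
    filter_upwards with y
    exact (measurePreserving_add_right volume _).map_eq
  have := (measurePreserving_add_right (volume : Measure ℝ) k.1).skew_product
    (μc := (volume : Measure (ℝ × ℝ))) (μd := (volume : Measure (ℝ × ℝ)))
    (g := fun x1 y => (y.1 + k.2.1, y.2 + (k.2.2 + (x1 * k.2.1 - y.1 * k.1) / 2 + 0)))
    (by fun_prop) (by filter_upwards with y using (h2 y 0).map_eq)
  have e : (fun x => Hmul x k) = (fun p : ℝ × ℝ × ℝ => (p.1 + k.1, p.2.1 + k.2.1,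
      p.2.2 + (k.2.2 + (p.1 * k.2.1 - p.2.1 * k.1) / 2 + 0))) := by
    funext x
    simp only [Hmul, Prod.mk.injEq]
    refine ⟨trivial, trivial, by ring⟩
  rw [e]; exact this

/-- Left translations preserve Lebesgue measure. -/
lemma mp_left (k : Heis) : MeasurePreserving (fun x => Hmul k x) (volume : Measure Heis) volume := by
  have h2 : ∀ c : ℝ, MeasurePreserving
      (fun y : ℝ × ℝ => (y.1 + k.2.1, y.2 + (k.2.2 + (k.1 * y.1 - k.2.1 * c) / 2)))
      (volume : Measure (ℝ × ℝ)) volume := by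
    intro c
    refine (measurePreserving_add_right volume k.2.1).skew_product
      (g := fun y1 y2 => y2 + (k.2.2 + (k.1 * y1 - k.2.1 * c) / 2)) (by fun_prop) ?_
    filter_upwards with y
    exact (measurePreserving_add_right volume _).map_eq
  have := (measurePreserving_add_right (volume : Measure ℝ) k.1).skew_product
    (μc := (volume : Measure (ℝ × ℝ))) (μd := (volume : Measure (ℝ × ℝ)))
    (g := fun x1 y => (y.1 + k.2.1, y.2 + (k.2.2 + (k.1 * y.1 - k.2.1 * x1) / 2)))
    (by fun_prop) (by filter_upwards with y using (h2 y).map_eq)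
  have e : (fun x => Hmul k x) = (fun p : ℝ × ℝ × ℝ => (p.1 + k.1, p.2.1 + k.2.1,
      p.2.2 + (k.2.2 + (k.1 * p.2.1 - k.2.1 * p.1) / 2))) := by
    funext x
    simp only [Hmul, Prod.mk.injEq]
    refine ⟨by ring, by ring, by ring⟩
  rw [e]; exact this

lemma hbox_eq (r : ℝ) : hbox r =
    Set.Icc (-r) r ×ˢ (Set.Icc (-r) r ×ˢ Set.Icc (-r ^ 2) (r ^ 2)) := by
  ext x
  simp only [hbox, abs_le, Set.mem_prod, Set.mem_setOf_eq, Set.mem_Icc]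

lemma hbox_meas (r : ℝ) : MeasurableSet (hbox r) := by
  rw [hbox_eq]; measurability

lemma hbox_vol {r : ℝ} (hr : 0 ≤ r) : (volume : Measure Heis) (hbox r) = ENNReal.ofReal (8 * r ^ 4) := by
  rw [hbox_eq, Measure.volume_eq_prod, Measure.prod_prod, Measure.volume_eq_prod, Measure.prod_prod,
    Real.volume_Icc, Real.volume_Icc, ← ENNReal.ofReal_mul (by nlinarith),
    ← ENNReal.ofReal_mul (by linarith)]
  congr 1; ring

lemma continuous_Hmul : Continuous (fun p : Heis × Heis => Hmul p.1 p.2) := by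
  unfold Hmul; fun_prop

@[fun_prop]
lemma measurable_Hmul {α : Type*} [MeasurableSpace α] {f g : α → Heis} (hf : Measurable f)
    (hg : Measurable g) : Measurable (fun a => Hmul (f a) (g a)) := by
  unfold Hmul; fun_prop

end

open MeasureTheory Real Filter
noncomputable section

/-- Speed of an admissible path. -/
def spd {x y : Heis} (P : AdmissiblePath x y) (s : ℝ) : ℝ := Real.sqrt (P.a1 s ^ 2 + P.a2 s ^ 2)

lemma spd_nonneg {x y : Heis} (P : AdmissiblePath x y) (s : ℝ) : 0 ≤ spd P s := Real.sqrt_nonneg _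

lemma a1_le_spd {x y : Heis} (P : AdmissiblePath x y) (s : ℝ) : |P.a1 s| ≤ spd P s :=
  Real.abs_le_sqrt (by nlinarith [sq_nonneg (P.a2 s)])

lemma a2_le_spd {x y : Heis} (P : AdmissiblePath x y) (s : ℝ) : |P.a2 s| ≤ spd P s :=
  Real.abs_le_sqrt (by nlinarith [sq_nonneg (P.a1 s)])

lemma spd_meas {x y : Heis} (P : AdmissiblePath x y) : Measurable (spd P) := by
  have h1 := P.meas1
  have h2 := P.meas2
  unfold spd; fun_prop

lemma path_ae {x y : Heis} (P : AdmissiblePath x y) : ∀ᵐ s : ℝ, s ∈ Set.Icc (0:ℝ) 1 →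
    HasDerivAt P.γ (P.a1 s • (((1 : ℝ), (0 : ℝ), -(P.γ s).2.1 / 2) : Heis)
      + P.a2 s • (((0 : ℝ), (1 : ℝ), (P.γ s).1 / 2) : Heis)) s :=
  (ae_restrict_iff' measurableSet_Icc).1 P.admissible

lemma path_deriv {x y : Heis} (P : AdmissiblePath x y) : ∀ᵐ s : ℝ, s ∈ Set.Icc (0:ℝ) 1 →
    HasDerivAt (fun s => (P.γ s).1) (P.a1 s) s ∧ HasDerivAt (fun s => (P.γ s).2.1) (P.a2 s) s ∧
    HasDerivAt (fun s => (P.γ s).2.2) (((P.γ s).1 * P.a2 s - (P.γ s).2.1 * P.a1 s) / 2) s := by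
  filter_upwards [path_ae P] with s hs h
  have h := hs h
  have h1 := h.hasFDerivAt.fst.hasDerivAt
  have h2 := h.hasFDerivAt.snd.fst.hasDerivAt
  have h3 := h.hasFDerivAt.snd.snd.hasDerivAt
  simp at h1 h2 h3
  refine ⟨h1, h2, h3.congr_deriv ?_⟩
  ring

lemma spd_bdd {x y : Heis} (P : AdmissiblePath x y) :
    ∃ K : ℝ, ∀ᵐ s : ℝ, s ∈ Set.Icc (0:ℝ) 1 → spd P s ≤ K := by
  obtain ⟨K, hK⟩ := P.lipschitz
  refine ⟨2 * K, ?_⟩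
  have n0 : ∀ᵐ s : ℝ, s ≠ 0 := by simp [ae_iff, measure_singleton]
  have n1 : ∀ᵐ s : ℝ, s ≠ 1 := by simp [ae_iff, measure_singleton]
  filter_upwards [path_deriv P, n0, n1] with s hs h0 h1 h
  obtain ⟨d1, d2, -⟩ := hs h
  have hn : Set.Icc (0:ℝ) 1 ∈ nhds s :=
    Icc_mem_nhds (lt_of_le_of_ne h.1 (Ne.symm h0)) (lt_of_le_of_ne h.2 h1)
  have l1 : LipschitzOnWith (1 * K) (fun s => (P.γ s).1) (Set.Icc 0 1) :=
    LipschitzWith.prod_fst.comp_lipschitzOnWith hK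
  have l2 : LipschitzOnWith (1 * (1 * K)) (fun s => (P.γ s).2.1) (Set.Icc 0 1) :=
    LipschitzWith.prod_fst.comp_lipschitzOnWith (LipschitzWith.prod_snd.comp_lipschitzOnWith hK)
  have e1 := d1.le_of_lipschitzOn hn l1
  have e2 := d2.le_of_lipschitzOn hn l2
  simp only [one_mul, Real.norm_eq_abs] at e1 e2
  unfold spd
  rw [Real.sqrt_le_left (by positivity)]
  have := sq_le_sq' (neg_le_of_abs_le e1) (le_of_abs_le e1)
  have := sq_le_sq' (neg_le_of_abs_le e2) (le_of_abs_le e2)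
  nlinarith [sq_nonneg (K : ℝ)]

lemma spd_intOn {x y : Heis} (P : AdmissiblePath x y) : IntegrableOn (spd P) (Set.Icc 0 1) := by
  obtain ⟨K, hK⟩ := spd_bdd P
  refine Measure.integrableOn_of_bounded (M := K) (by simp) (spd_meas P).aestronglyMeasurable ?_
  rw [ae_restrict_iff' measurableSet_Icc]
  filter_upwards [hK] with s hs h
  rw [Real.norm_eq_abs, abs_of_nonneg (spd_nonneg P s)]
  exact hs h

lemma spd_ii {x y : Heis} (P : AdmissiblePath x y) {a b : ℝ} (ha : 0 ≤ a) (hab : a ≤ b) (hb : b ≤ 1) :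
    IntervalIntegrable (spd P) volume a b := by
  rw [intervalIntegrable_iff_integrableOn_Icc_of_le hab]
  exact (spd_intOn P).mono_set (Set.Icc_subset_Icc ha hb)

lemma pathLength_eq {x y : Heis} (P : AdmissiblePath x y) :
    pathLength P = ∫ s in (0:ℝ)..1, spd P s := by
  rw [intervalIntegral.integral_of_le zero_le_one, ← integral_Icc_eq_integral_Ioc]
  rfl

lemma ae_affine {c d : ℝ} (hc : c ≠ 0) {Q : ℝ → Prop} (h : ∀ᵐ u : ℝ, Q u) :
    ∀ᵐ s : ℝ, Q (c * s + d) := by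
  have q1 : Measure.QuasiMeasurePreserving (fun s : ℝ => c * s) volume volume := by
    refine ⟨by fun_prop, ?_⟩
    rw [Real.map_volume_mul_left hc]
    exact Measure.smul_absolutelyContinuous
  have q2 : Measure.QuasiMeasurePreserving (fun s : ℝ => s + d) volume volume :=
    (measurePreserving_add_right volume d).quasiMeasurePreserving
  exact (q2.comp q1).ae h

lemma lip_glue {γ : ℝ → Heis} {K L : NNReal} {c : ℝ}
    (h1 : LipschitzOnWith K γ (Set.Icc 0 c)) (h2 : LipschitzOnWith L γ (Set.Icc c 1))
    (hc0 : 0 ≤ c) (hc1 : c ≤ 1) :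
    LipschitzOnWith (K + L) γ (Set.Icc 0 1) := by
  have key : ∀ s ∈ Set.Icc (0:ℝ) 1, ∀ t ∈ Set.Icc (0:ℝ) 1, s ≤ t →
      dist (γ s) (γ t) ≤ (K + L : NNReal) * dist s t := by
    intro s hs t ht hst
    have hd : dist s t = t - s := by rw [dist_comm, Real.dist_eq, abs_of_nonneg (by linarith)]
    have K0 := K.2
    have L0 := L.2
    rw [NNReal.coe_add, hd]
    change (0:ℝ) ≤ (K:ℝ) at K0
    change (0:ℝ) ≤ (L:ℝ) at L0
    rcases le_total t c with htc | htc
    · have := h1.dist_le_mul s ⟨hs.1, hst.trans htc⟩ t ⟨ht.1, htc⟩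
      rw [hd] at this
      nlinarith
    rcases le_total c s with hsc | hsc
    · have := h2.dist_le_mul s ⟨hsc, hs.2⟩ t ⟨htc, ht.2⟩
      rw [hd] at this
      nlinarith
    · have e1 := h1.dist_le_mul s ⟨hs.1, hsc⟩ c ⟨hc0, le_rfl⟩
      have e2 := h2.dist_le_mul c ⟨le_rfl, hc1⟩ t ⟨htc, ht.2⟩
      have e3 := dist_triangle (γ s) (γ c) (γ t)
      rw [dist_comm s c, Real.dist_eq, abs_of_nonneg (by linarith)] at e1
      rw [dist_comm c t, Real.dist_eq, abs_of_nonneg (by linarith)] at e2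
      nlinarith
  refine LipschitzOnWith.of_dist_le_mul ?_
  intro s hs t ht
  rcases le_total s t with h | h
  · exact key s hs t ht h
  · rw [dist_comm, dist_comm s t]; exact key t ht s hs h

lemma lip_affine {γ : ℝ → Heis} {K : NNReal} {c d a b : ℝ}
    (h : LipschitzOnWith K γ (Set.Icc 0 1)) (hm : ∀ s ∈ Set.Icc a b, c * s + d ∈ Set.Icc (0:ℝ) 1) :
    ∃ L : NNReal, LipschitzOnWith L (fun s => γ (c * s + d)) (Set.Icc a b) := by
  refine ⟨K * ‖c‖₊, LipschitzOnWith.of_dist_le_mul ?_⟩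
  intro s hs t ht
  have := h.dist_le_mul _ (hm s hs) _ (hm t ht)
  refine this.trans ?_
  rw [Real.dist_eq, Real.dist_eq, NNReal.coe_mul, coe_nnnorm, Real.norm_eq_abs, mul_assoc, ← abs_mul]
  apply le_of_eq
  congr 2
  ring

/-- Tail of a path. -/
lemma exists_tail {x y : Heis} (P : AdmissiblePath x y) {s₀ : ℝ} (h0 : 0 ≤ s₀) (h1 : s₀ < 1) :
    ∃ P' : AdmissiblePath (P.γ s₀) y, pathLength P' = ∫ s in s₀..1, spd P s := by
  have hc : (1 - s₀) ≠ 0 := by linarith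
  have hm : ∀ s ∈ Set.Icc (0:ℝ) 1, (1 - s₀) * s + s₀ ∈ Set.Icc (0:ℝ) 1 := by
    rintro s ⟨hs0, hs1⟩
    constructor <;> nlinarith
  let P' : AdmissiblePath (P.γ s₀) y :=
    { γ := fun s => P.γ ((1 - s₀) * s + s₀)
      a1 := fun s => (1 - s₀) * P.a1 ((1 - s₀) * s + s₀)
      a2 := fun s => (1 - s₀) * P.a2 ((1 - s₀) * s + s₀)
      lipschitz := lip_affine P.lipschitz.choose_spec hm
      meas1 := by have := P.meas1; fun_prop
      meas2 := by have := P.meas2; fun_prop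
      start := by simp
      endpoint := by simp [P.endpoint]
      admissible := by
        rw [ae_restrict_iff' measurableSet_Icc]
        filter_upwards [ae_affine (d := s₀) hc (path_ae P)] with s hs h
        have h2 := hs (hm s h)
        have h3 : HasDerivAt (fun s : ℝ => (1 - s₀) * s + s₀) (1 - s₀) s := by
          simpa using ((hasDerivAt_id s).const_mul (1 - s₀)).add_const s₀
        have := HasDerivAt.scomp s h2 h3
        refine this.congr_deriv ?_
        rw [smul_add, smul_smul, smul_smul] }
  refine ⟨P', ?_⟩
  · rw [pathLength_eq]
    have : ∀ s, spd P' s = (1 - s₀) * spd P ((1 - s₀) * s + s₀) := by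
      intro s
      simp only [spd, P']
      rw [mul_pow, mul_pow, ← mul_add, Real.sqrt_mul (sq_nonneg _), Real.sqrt_sq (by linarith)]
    simp_rw [this]
    rw [intervalIntegral.integral_const_mul, intervalIntegral.integral_comp_mul_add _ hc,
      smul_eq_mul, ← mul_assoc, mul_inv_cancel₀ hc]
    simp

/-- Prepending a horizontal segment. -/
lemma exists_cons {x y : Heis} (P : AdmissiblePath x y) (a b : ℝ) :
    ∃ P' : AdmissiblePath (Hmul x (hor a b)) y,
      pathLength P' = Real.sqrt (a ^ 2 + b ^ 2) + pathLength P := by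
  classical
  set γ' : ℝ → Heis := fun s => if s ≤ 1/2 then Hmul x (hor ((1 - 2 * s) * a) ((1 - 2 * s) * b))
    else P.γ (2 * s + (-1)) with hγ'
  have haff : ∀ s, Hmul x (hor ((1 - 2 * s) * a) ((1 - 2 * s) * b)) = Hmul x (hor a b) +
      s • ((-2 * a, -2 * b, (x.1 * (-2 * b) - x.2.1 * (-2 * a)) / 2) : Heis) := by
    intro s
    simp only [Hmul, hor, Prod.smul_mk, Prod.mk_add_mk, Prod.mk.injEq, smul_eq_mul]
    refine ⟨by ring, by ring, by ring⟩
  set w : Heis := ((-2 * a, -2 * b, (x.1 * (-2 * b) - x.2.1 * (-2 * a)) / 2) : Heis) with hw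
  have hm : ∀ s ∈ Set.Icc (1/2:ℝ) 1, 2 * s + (-1) ∈ Set.Icc (0:ℝ) 1 := by
    rintro s ⟨hs0, hs1⟩
    constructor <;> linarith
  have hlip : ∃ K : NNReal, LipschitzOnWith K γ' (Set.Icc 0 1) := by
    obtain ⟨K, hK⟩ := P.lipschitz
    obtain ⟨L, hL⟩ := lip_affine (a := 1/2) (b := 1) (c := 2) (d := -1) hK hm
    refine ⟨‖w‖₊ + L, lip_glue (c := 1/2) ?_ ?_ (by norm_num) (by norm_num)⟩
    · refine LipschitzOnWith.of_dist_le_mul ?_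
      intro s hs t ht
      simp only [hγ', if_pos hs.2, if_pos ht.2, haff]
      rw [dist_add_left, dist_eq_norm, ← sub_smul, norm_smul, mul_comm, coe_nnnorm]
      rfl
    · have hEq : ∀ s ∈ Set.Icc (1/2:ℝ) 1, γ' s = P.γ (2 * s + (-1)) := by
        rintro s ⟨hs, -⟩
        simp only [hγ']
        split_ifs with h
        · have : s = 1/2 := le_antisymm h hs
          subst this
          norm_num [P.start]
          simp [Hmul, hor]
        · rfl
      intro s hs t ht
      rw [hEq s hs, hEq t ht]
      exact hL hs ht
  have nh : ∀ᵐ s : ℝ, s ≠ 1/2 := by simp [ae_iff, measure_singleton]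
  refine ⟨{ γ := γ'
            a1 := fun s => if s ≤ 1/2 then -2 * a else 2 * P.a1 (2 * s + (-1))
            a2 := fun s => if s ≤ 1/2 then -2 * b else 2 * P.a2 (2 * s + (-1))
            lipschitz := hlip
            meas1 := by
              have := P.meas1
              exact Measurable.ite measurableSet_Iic (by fun_prop) (by fun_prop)
            meas2 := by
              have := P.meas2
              exact Measurable.ite measurableSet_Iic (by fun_prop) (by fun_prop)
            start := by simp [hγ']
            endpoint := by simp only [hγ']; norm_num [P.endpoint]
            admissible := ?_ }, ?_⟩
  · rw [ae_restrict_iff' measurableSet_Icc]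
    filter_upwards [ae_affine (d := -1) two_ne_zero (path_ae P), nh] with s hs hne h
    rcases lt_or_gt_of_ne hne with hlt | hgt
    · have hd : HasDerivAt (fun s : ℝ => Hmul x (hor a b) + s • w) w s := by
        simpa using ((hasDerivAt_id s).smul_const w).const_add (Hmul x (hor a b))
      have he : γ' =ᶠ[nhds s] (fun s : ℝ => Hmul x (hor a b) + s • w) := by
        filter_upwards [gt_mem_nhds hlt] with u hu
        simp only [hγ', if_pos (le_of_lt hu), haff]
      have := hd.congr_of_eventuallyEq he
      refine this.congr_deriv ?_
      simp only [if_pos hlt.le, hγ', hw, Hmul, hor, Prod.smul_mk, Prod.mk_add_mk, Prod.mk.injEq,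
        smul_eq_mul]
      refine ⟨by ring, by ring, by ring⟩
    · have h2 := hs (hm s ⟨hgt.le, h.2⟩)
      have h3 : HasDerivAt (fun s : ℝ => 2 * s + (-1)) 2 s := by
        simpa using ((hasDerivAt_id s).const_mul 2).add_const (-1)
      have h4 := HasDerivAt.scomp s h2 h3
      have he : γ' =ᶠ[nhds s] (P.γ ∘ fun s : ℝ => 2 * s + (-1)) := by
        filter_upwards [lt_mem_nhds hgt] with u hu
        simp only [hγ', if_neg (not_le.2 hu), Function.comp]
      have := h4.congr_of_eventuallyEq he
      refine this.congr_deriv ?_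
      rw [he.eq_of_nhds]
      simp only [if_neg (not_le.2 hgt), smul_add, smul_smul, Function.comp]
  · set P' : AdmissiblePath (Hmul x (hor a b)) y := _
    rw [pathLength_eq, pathLength_eq P,
      ← intervalIntegral.integral_add_adjacent_intervals (b := 1/2)
      (spd_ii P' le_rfl (by norm_num) (by norm_num)) (spd_ii P' (by norm_num) (by norm_num) le_rfl)]
    congr 1
    · have : ∫ s in (0:ℝ)..1/2, spd P' s = ∫ s in (0:ℝ)..1/2, 2 * Real.sqrt (a ^ 2 + b ^ 2) := by
        apply intervalIntegral.integral_congr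
        intro s hs
        rw [Set.uIcc_of_le (by norm_num)] at hs
        simp only [spd, P', if_pos hs.2]
        rw [show (-2 * a) ^ 2 + (-2 * b) ^ 2 = 2 ^ 2 * (a ^ 2 + b ^ 2) by ring,
          Real.sqrt_mul (sq_nonneg _), Real.sqrt_sq (by norm_num)]
      rw [this]; simp
    · have : ∫ s in (1/2:ℝ)..1, spd P' s = ∫ s in (1/2:ℝ)..1, 2 * spd P (2 * s + (-1)) := by
        apply intervalIntegral.integral_congr_ae
        filter_upwards [nh] with s hne hs
        rw [Set.uIoc_of_le (by norm_num)] at hs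
        simp only [spd, P', if_neg (not_le.2 hs.1)]
        rw [mul_pow, mul_pow, ← mul_add, Real.sqrt_mul (sq_nonneg _), Real.sqrt_sq (by norm_num)]
      rw [this, intervalIntegral.integral_const_mul,
        intervalIntegral.integral_comp_mul_add _ two_ne_zero, smul_eq_mul]
      norm_num
      ring

/-- Displacement along a path. -/
lemma displacement {x y : Heis} (P : AdmissiblePath x y) {s : ℝ} (h0 : 0 ≤ s) (h1 : s ≤ 1) :
    Hmul (-x) (P.γ s) ∈ hbox (∫ u in (0:ℝ)..s, spd P u) := by
  obtain ⟨K, hK⟩ := P.lipschitz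
  have hsub : Set.uIcc 0 s ⊆ Set.Icc (0:ℝ) 1 := by
    rw [Set.uIcc_of_le h0]; exact Set.Icc_subset_Icc le_rfl h1
  have mono : ∀ t ∈ Set.Icc 0 s, ∫ u in (0:ℝ)..t, spd P u ≤ ∫ u in (0:ℝ)..s, spd P u := by
    intro t ht
    rw [← intervalIntegral.integral_add_adjacent_intervals (spd_ii P le_rfl ht.1 (ht.2.trans h1))
      (spd_ii P ht.1 ht.2 h1)]
    have := intervalIntegral.integral_nonneg (μ := volume) ht.2 (fun u _ => spd_nonneg P u)
    linarith
  have ac1 : ∀ t ∈ Set.Icc 0 s, AbsolutelyContinuousOnInterval (fun s => (P.γ s).1) 0 t := by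
    intro t ht
    have : LipschitzOnWith (1 * K) (fun s => (P.γ s).1) (Set.Icc 0 1) :=
      LipschitzWith.prod_fst.comp_lipschitzOnWith hK
    refine (this.mono ?_).absolutelyContinuousOnInterval
    rw [Set.uIcc_of_le ht.1]; exact Set.Icc_subset_Icc le_rfl (ht.2.trans h1)
  have ac2 : ∀ t ∈ Set.Icc 0 s, AbsolutelyContinuousOnInterval (fun s => (P.γ s).2.1) 0 t := by
    intro t ht
    have : LipschitzOnWith (1 * (1 * K)) (fun s => (P.γ s).2.1) (Set.Icc 0 1) :=
      LipschitzWith.prod_fst.comp_lipschitzOnWith (LipschitzWith.prod_snd.comp_lipschitzOnWith hK)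
    refine (this.mono ?_).absolutelyContinuousOnInterval
    rw [Set.uIcc_of_le ht.1]; exact Set.Icc_subset_Icc le_rfl (ht.2.trans h1)
  have ac3 : AbsolutelyContinuousOnInterval (fun s => (P.γ s).2.2) 0 s := by
    have : LipschitzOnWith (1 * (1 * K)) (fun s => (P.γ s).2.2) (Set.Icc 0 1) :=
      LipschitzWith.prod_snd.comp_lipschitzOnWith (LipschitzWith.prod_snd.comp_lipschitzOnWith hK)
    exact (this.mono hsub).absolutelyContinuousOnInterval
  have pd := path_deriv P
  have b1 : ∀ t ∈ Set.Icc 0 s, |(P.γ t).1 - x.1| ≤ ∫ u in (0:ℝ)..s, spd P u := by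
    intro t ht
    have e := (ac1 t ht).integral_deriv_eq_sub
    rw [P.start] at e
    rw [← e]
    refine le_trans ?_ (mono t ht)
    rw [← Real.norm_eq_abs]
    refine intervalIntegral.norm_integral_le_of_norm_le ht.1 ?_
      (spd_ii P le_rfl ht.1 (ht.2.trans h1))
    filter_upwards [pd] with u hu hm
    rw [(hu ⟨hm.1.le, hm.2.trans (ht.2.trans h1)⟩).1.deriv]
    exact a1_le_spd P u
  have b2 : ∀ t ∈ Set.Icc 0 s, |(P.γ t).2.1 - x.2.1| ≤ ∫ u in (0:ℝ)..s, spd P u := by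
    intro t ht
    have e := (ac2 t ht).integral_deriv_eq_sub
    rw [P.start] at e
    rw [← e]
    refine le_trans ?_ (mono t ht)
    rw [← Real.norm_eq_abs]
    refine intervalIntegral.norm_integral_le_of_norm_le ht.1 ?_
      (spd_ii P le_rfl ht.1 (ht.2.trans h1))
    filter_upwards [pd] with u hu hm
    rw [(hu ⟨hm.1.le, hm.2.trans (ht.2.trans h1)⟩).2.1.deriv]
    exact a2_le_spd P u
  set ℓ := ∫ u in (0:ℝ)..s, spd P u with hℓ
  have smem : s ∈ Set.Icc 0 s := ⟨h0, le_rfl⟩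
  refine ⟨?_, ?_, ?_⟩
  · have := b1 s smem
    simp only [Hmul, Prod.fst_neg]
    rwa [neg_add_eq_sub]
  · have := b2 s smem
    simp only [Hmul, Prod.fst_neg, Prod.snd_neg]
    rwa [neg_add_eq_sub]
  · have ac : AbsolutelyContinuousOnInterval
        ((fun s => (P.γ s).2.2) + ((fun s => (x.2.1 / 2) * (P.γ s).1)
          - (fun s => (x.1 / 2) * (P.γ s).2.1))) 0 s :=
      ac3.add (((ac1 s smem).const_mul (x.2.1 / 2)).sub ((ac2 s smem).const_mul (x.1 / 2)))
    have e := ac.integral_deriv_eq_sub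
    have e2 : (Hmul (-x) (P.γ s)).2.2 = ∫ u in (0:ℝ)..s, deriv ((fun s => (P.γ s).2.2) +
        ((fun s => (x.2.1 / 2) * (P.γ s).1) - (fun s => (x.1 / 2) * (P.γ s).2.1))) u := by
      rw [e]
      simp only [Hmul, Pi.add_apply, Pi.sub_apply, P.start, Prod.fst_neg, Prod.snd_neg]
      ring
    rw [e2]
    have e3 : ℓ ^ 2 = ∫ u in (0:ℝ)..s, ℓ * spd P u := by
      rw [intervalIntegral.integral_const_mul, ← hℓ]; ring
    rw [e3]
    rw [← Real.norm_eq_abs]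
    refine intervalIntegral.norm_integral_le_of_norm_le h0 ?_
      ((spd_ii P le_rfl h0 h1).const_mul ℓ)
    filter_upwards [pd] with u hu hm
    have hum : u ∈ Set.Icc 0 s := ⟨hm.1.le, hm.2⟩
    obtain ⟨d1, d2, d3⟩ := hu ⟨hm.1.le, hm.2.trans h1⟩
    have := d3.add ((d1.const_mul (x.2.1 / 2)).sub (d2.const_mul (x.1 / 2)))
    rw [this.deriv, Real.norm_eq_abs]
    have c1 := b1 u hum
    have c2 := b2 u hum
    have g1 := a1_le_spd P u
    have g2 := a2_le_spd P u
    have l0 : 0 ≤ ℓ := (abs_nonneg _).trans c1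
    have f1 : |((P.γ u).1 - x.1) * P.a2 u| ≤ ℓ * spd P u := by
      rw [abs_mul]; gcongr
    have f2 : |((P.γ u).2.1 - x.2.1) * P.a1 u| ≤ ℓ * spd P u := by
      rw [abs_mul]; gcongr
    rw [abs_le] at f1 f2 ⊢
    constructor <;> linarith [f1.1, f1.2, f2.1, f2.2]

end

open MeasureTheory Real Filter
noncomputable section

/-- The constant path at the identity. -/
def constPath : AdmissiblePath He He where
  γ := fun _ => He
  a1 := fun _ => 0
  a2 := fun _ => 0
  lipschitz := ⟨0, (LipschitzWith.const He).lipschitzOnWith⟩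
  meas1 := measurable_const
  meas2 := measurable_const
  start := rfl
  endpoint := rfl
  admissible := by
    filter_upwards with s
    refine (hasDerivAt_const s He).congr_deriv ?_
    simp

lemma pathLength_nonneg {x y : Heis} (P : AdmissiblePath x y) : 0 ≤ pathLength P :=
  integral_nonneg (fun _ => Real.sqrt_nonneg _)

lemma path_mul {x y : Heis} (P : AdmissiblePath x y) {r : ℝ} (hr : 0 < r) {h : Heis}
    (hh : h ∈ hbox r) : ∃ P' : AdmissiblePath (Hmul x h) y, pathLength P' ≤ pathLength P + 10 * r := by
  obtain ⟨a, b, ha, hb, hx⟩ := hbox_decomp hr hh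
  rw [hx]
  obtain ⟨P0, h0⟩ := exists_cons P (a 0) (b 0)
  obtain ⟨P1, h1⟩ := exists_cons P0 (a 1) (b 1)
  obtain ⟨P2, h2⟩ := exists_cons P1 (a 2) (b 2)
  obtain ⟨P3, h3⟩ := exists_cons P2 (a 3) (b 3)
  obtain ⟨P4, h4⟩ := exists_cons P3 (a 4) (b 4)
  refine ⟨P4, ?_⟩
  have key : ∀ i, Real.sqrt (a i ^ 2 + b i ^ 2) ≤ 2 * r := by
    intro i
    rw [Real.sqrt_le_left (by positivity)]
    have := sq_le_sq' (neg_le_of_abs_le (ha i)) (le_of_abs_le (ha i))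
    have := sq_le_sq' (neg_le_of_abs_le (hb i)) (le_of_abs_le (hb i))
    nlinarith [sq_nonneg r]
  linarith [key 0, key 1, key 2, key 3, key 4]

lemma mem_hbox_big (x : Heis) : ∃ r : ℝ, 0 < r ∧ x ∈ hbox r := by
  refine ⟨|x.1| + |x.2.1| + |x.2.2| + 1, by positivity, ?_, ?_, ?_⟩
  · linarith [abs_nonneg x.1, abs_nonneg x.2.1, abs_nonneg x.2.2]
  · linarith [abs_nonneg x.1, abs_nonneg x.2.1, abs_nonneg x.2.2]
  · nlinarith [abs_nonneg x.1, abs_nonneg x.2.1, abs_nonneg x.2.2]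

lemma exists_path (x : Heis) : Nonempty (AdmissiblePath x He) := by
  obtain ⟨r, hr, hx⟩ := mem_hbox_big x
  obtain ⟨P, -⟩ := path_mul constPath hr hx
  rw [He_Hmul] at P
  exact ⟨P⟩

lemma ccNorm_le {x : Heis} (P : AdmissiblePath x He) : ccNorm x ≤ pathLength P :=
  csInf_le ⟨0, by rintro _ ⟨P, rfl⟩; exact pathLength_nonneg P⟩ ⟨P, rfl⟩

lemma ccNorm_nonneg (x : Heis) : 0 ≤ ccNorm x :=
  Real.sInf_nonneg (by rintro _ ⟨P, rfl⟩; exact pathLength_nonneg P)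

lemma exists_path_lt {x : Heis} {t : ℝ} (h : ccNorm x < t) :
    ∃ P : AdmissiblePath x He, pathLength P < t := by
  obtain ⟨P₀⟩ := exists_path x
  obtain ⟨l, ⟨P, rfl⟩, hl⟩ := exists_lt_of_csInf_lt (⟨_, P₀, rfl⟩ : Set.Nonempty {l : ℝ | ∃ p : AdmissiblePath x He, l = pathLength p}) h
  exact ⟨P, hl⟩

lemma ccNorm_mul {r : ℝ} (hr : 0 < r) {h : Heis} (hh : h ∈ hbox r) (x : Heis) :
    ccNorm (Hmul x h) ≤ ccNorm x + 10 * r := by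
  refine le_of_forall_pos_lt_add ?_
  intro ε hε
  obtain ⟨P, hP⟩ := exists_path_lt (lt_add_of_pos_right (ccNorm x) hε)
  obtain ⟨P', hP'⟩ := path_mul P hr hh
  linarith [ccNorm_le P']

lemma ccNorm_mul' {r : ℝ} (hr : 0 < r) {h : Heis} (hh : h ∈ hbox r) (x : Heis) :
    ccNorm x ≤ ccNorm (Hmul x h) + 10 * r := by
  have := ccNorm_mul hr (hbox_neg hh) (Hmul x h)
  rwa [Hmul_right_neg] at this

lemma ccNorm_He : ccNorm He = 0 := by
  refine le_antisymm ((ccNorm_le constPath).trans ?_) (ccNorm_nonneg _)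
  simp [pathLength, constPath]

lemma ccNorm_hbox {r : ℝ} (hr : 0 < r) {h : Heis} (hh : h ∈ hbox r) : ccNorm h ≤ 10 * r := by
  have := ccNorm_mul hr hh He
  rwa [He_Hmul, ccNorm_He, zero_add] at this

lemma mem_hbox_of_ccNorm {x : Heis} {t : ℝ} (h : ccNorm x < t) : x ∈ hbox t := by
  obtain ⟨P, hP⟩ := exists_path_lt h
  have := displacement P zero_le_one le_rfl
  rw [P.endpoint, Hmul_He, ← pathLength_eq] at this
  have h2 := hbox_neg this
  rw [neg_neg] at h2
  exact hbox_mono (pathLength_nonneg P) hP.le h2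

lemma ccNorm_descent {x : Heis} {r : ℝ} (hr : 0 < r) (hx : r < ccNorm x) :
    ∃ g ∈ hbox r, ccNorm (Hmul x g) ≤ ccNorm x - 3 / 4 * r := by
  obtain ⟨P, hP⟩ := exists_path_lt (show ccNorm x < ccNorm x + r / 4 by linarith)
  have hl : r < pathLength P := hx.trans_le (ccNorm_le P)
  have hc : ContinuousOn (fun s => ∫ u in (0:ℝ)..s, spd P u) (Set.Icc 0 1) := by
    have := intervalIntegral.continuousOn_primitive_interval (f := spd P) (a := 0) (b := 1)
      (μ := volume) (by rw [Set.uIcc_of_le zero_le_one]; exact spd_intOn P)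
    rwa [Set.uIcc_of_le zero_le_one] at this
  have hmem : r ∈ Set.Icc (∫ u in (0:ℝ)..0, spd P u) (∫ u in (0:ℝ)..1, spd P u) := by
    rw [← pathLength_eq, intervalIntegral.integral_same]
    exact ⟨hr.le, hl.le⟩
  obtain ⟨s, hs, hsr⟩ := intermediate_value_Icc zero_le_one hc hmem
  simp only at hsr
  have hs1 : s < 1 := by
    rcases lt_or_eq_of_le hs.2 with h | h
    · exact h
    · rw [h, ← pathLength_eq] at hsr
      linarith
  obtain ⟨P', hP'⟩ := exists_tail P hs.1 hs1
  refine ⟨Hmul (-x) (P.γ s), ?_, ?_⟩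
  · have := displacement P hs.1 hs.2
    rwa [hsr] at this
  · rw [Hmul_cancel_neg]
    have e := intervalIntegral.integral_add_adjacent_intervals (spd_ii P le_rfl hs.1 hs.2)
      (spd_ii P hs.1 hs.2 le_rfl)
    rw [← pathLength_eq, hsr, ← hP'] at e
    linarith [ccNorm_le P']

lemma continuous_ccNorm : Continuous ccNorm := by
  rw [Metric.continuous_iff']
  intro x ε hε
  have hc : ContinuousAt (fun y => Hmul (-x) y) x :=
    (continuous_Hmul.comp (by fun_prop : Continuous (fun y : Heis => (-x, y)))).continuousAt
  have h0 : Hmul (-x) x = 0 := by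
    have := Hmul_neg_cancel x He
    rwa [Hmul_He] at this
  have hr : 0 < ε / 20 := by positivity
  have hn : hbox (ε / 20) ∈ nhds (Hmul (-x) x) := by
    rw [h0, hbox_eq]
    refine prod_mem_nhds (Icc_mem_nhds ?_ ?_) (prod_mem_nhds (Icc_mem_nhds ?_ ?_) (Icc_mem_nhds ?_ ?_)) <;>
    (try simp) <;> positivity
  filter_upwards [hc hn] with y hy
  have hy : Hmul (-x) y ∈ hbox (ε / 20) := hy
  have e1 := ccNorm_mul hr hy x
  have e2 := ccNorm_mul' hr hy x
  rw [Hmul_cancel_neg] at e1 e2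
  rw [Real.dist_eq, abs_lt]
  constructor <;> linarith

end

open MeasureTheory Real Filter
noncomputable section

/-- `|f|^q` as an extended nonnegative real. -/
def eF (q : ℝ) (f : Heis → ℝ) (x : Heis) : ENNReal := ‖f x‖ₑ ^ q

/-- `|∇f|^q` as an extended nonnegative real. -/
def eG (q : ℝ) (f : Heis → ℝ) (x : Heis) : ENNReal := ‖gradLen f x‖ₑ ^ q

lemma continuous_gradLen {f : Heis → ℝ} (hf : ContDiff ℝ 1 f) : Continuous (gradLen f) := by
  have h := hf.continuous_fderiv one_ne_zero
  have h1 : ∀ v : Heis, Continuous (fun x => fderiv ℝ f x v) := fun v => h.clm_apply continuous_const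
  have := h1 (1, 0, 0)
  have := h1 (0, 1, 0)
  have := h1 (0, 0, 1)
  unfold gradLen X1 X2
  fun_prop

lemma measurable_eG (q : ℝ) {f : Heis → ℝ} (hf : ContDiff ℝ 1 f) : Measurable (eG q f) := by
  have := (continuous_gradLen hf).measurable
  unfold eG; fun_prop

lemma measurable_eF (q : ℝ) {f : Heis → ℝ} (hf : ContDiff ℝ 1 f) : Measurable (eF q f) := by
  have := hf.continuous.measurable
  unfold eF; fun_prop

lemma hor_line_deriv {f : Heis → ℝ} (hf : ContDiff ℝ 1 f) (y : Heis) (a b s : ℝ) :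
    HasDerivAt (fun s : ℝ => f (Hmul y (hor (s * a) (s * b))))
      (a * X1 f (Hmul y (hor (s * a) (s * b))) + b * X2 f (Hmul y (hor (s * a) (s * b)))) s := by
  have haff : ∀ s, Hmul y (hor (s * a) (s * b)) = y +
      s • ((a, b, (y.1 * b - y.2.1 * a) / 2) : Heis) := by
    intro s
    obtain ⟨y1, y2, y3⟩ := y
    simp only [Hmul, hor, Prod.smul_mk, Prod.mk_add_mk, Prod.mk.injEq, smul_eq_mul]
    refine ⟨by first | trivial | ring, by first | trivial | ring, by ring⟩
  set w : Heis := (a, b, (y.1 * b - y.2.1 * a) / 2) with hw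
  have h1 : HasDerivAt (fun s : ℝ => Hmul y (hor (s * a) (s * b))) w s := by
    simp_rw [haff]
    simpa using ((hasDerivAt_id s).smul_const w).const_add y
  have h2 := (hf.differentiable one_ne_zero (Hmul y (hor (s * a) (s * b)))).hasFDerivAt
  have h3 := h2.comp_hasDerivAt s h1
  refine h3.congr_deriv ?_
  have : w = a • ((1, 0, 0) : Heis) + b • ((0, 1, 0) : Heis) +
      ((y.1 * b - y.2.1 * a) / 2) • ((0, 0, 1) : Heis) := by
    simp [hw]
  rw [this, map_add, map_add, map_smul, map_smul, map_smul]
  simp only [X1, X2, smul_eq_mul]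
  simp only [Hmul, hor]
  ring

lemma one_step {q r : ℝ} (hq : 1 ≤ q) {f : Heis → ℝ} (hf : ContDiff ℝ 1 f) (y : Heis) {a b : ℝ}
    (ha : |a| ≤ r) (hb : |b| ≤ r) :
    ‖f (Hmul y (hor a b)) - f y‖ₑ ^ q ≤ ENNReal.ofReal (2 * r) ^ q *
      ∫⁻ s in Set.Icc (0:ℝ) 1, eG q f (Hmul y (hor (s * a) (s * b))) := by
  have r0 : 0 ≤ r := (abs_nonneg _).trans ha
  have hgc : Continuous (fun s : ℝ => gradLen f (Hmul y (hor (s * a) (s * b)))) := by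
    refine (continuous_gradLen hf).comp ?_
    unfold Hmul hor; fun_prop
  have hbd : ∀ s : ℝ, |a * X1 f (Hmul y (hor (s * a) (s * b))) + b * X2 f (Hmul y (hor (s * a) (s * b)))|
      ≤ (2 * r) * gradLen f (Hmul y (hor (s * a) (s * b))) := by
    intro s
    set u := X1 f (Hmul y (hor (s * a) (s * b)))
    set v := X2 f (Hmul y (hor (s * a) (s * b)))
    have e : (2 * r) * gradLen f (Hmul y (hor (s * a) (s * b))) = Real.sqrt ((2 * r) ^ 2 * (u ^ 2 + v ^ 2)) := by
      rw [Real.sqrt_mul (by positivity), Real.sqrt_sq (by positivity)]; rfl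
    rw [e]
    apply Real.abs_le_sqrt
    have h1 := sq_le_sq' (neg_le_of_abs_le ha) (le_of_abs_le ha)
    have h2 := sq_le_sq' (neg_le_of_abs_le hb) (le_of_abs_le hb)
    have h3 : (a * u + b * v) ^ 2 ≤ (a ^ 2 + b ^ 2) * (u ^ 2 + v ^ 2) := by
      nlinarith [sq_nonneg (a * v - b * u)]
    have h4 : (a ^ 2 + b ^ 2) * (u ^ 2 + v ^ 2) ≤ (2 * r) ^ 2 * (u ^ 2 + v ^ 2) := by
      gcongr; nlinarith
    linarith
  have hdc : Continuous (fun s : ℝ => a * X1 f (Hmul y (hor (s * a) (s * b))) + b * X2 f (Hmul y (hor (s * a) (s * b)))) := by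
    have h := hf.continuous_fderiv one_ne_zero
    have h1 : ∀ v : Heis, Continuous (fun x => fderiv ℝ f x v) := fun v => h.clm_apply continuous_const
    have k1 := h1 (1, 0, 0)
    have k2 := h1 (0, 1, 0)
    have k3 := h1 (0, 0, 1)
    unfold X1 X2 Hmul hor
    fun_prop
  have ftc := intervalIntegral.integral_eq_sub_of_hasDerivAt (a := 0) (b := 1)
    (fun s _ => hor_line_deriv hf y a b s) (hdc.intervalIntegrable 0 1)
  have e0 : Hmul y (hor (0 * a) (0 * b)) = y := by simp [Hmul, hor]
  rw [e0, one_mul, one_mul, intervalIntegral.integral_of_le zero_le_one,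
    ← integral_Icc_eq_integral_Ioc] at ftc
  rw [← ftc]
  have hprob : IsProbabilityMeasure (volume.restrict (Set.Icc (0:ℝ) 1)) := ⟨by simp⟩
  have q0 : 0 < q := by linarith
  calc ‖∫ s in Set.Icc (0:ℝ) 1, (a * X1 f (Hmul y (hor (s * a) (s * b))) + b * X2 f (Hmul y (hor (s * a) (s * b))))‖ₑ ^ q
      ≤ (∫⁻ s in Set.Icc (0:ℝ) 1, ENNReal.ofReal (2 * r) * ‖gradLen f (Hmul y (hor (s * a) (s * b)))‖ₑ) ^ q := by
        refine ENNReal.rpow_le_rpow ?_ q0.le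
        refine (enorm_integral_le_lintegral_enorm _).trans (lintegral_mono fun s => ?_)
        rw [Real.enorm_eq_ofReal_abs, Real.enorm_eq_ofReal_abs, ← ENNReal.ofReal_mul (by positivity),
          abs_of_nonneg (a := gradLen f _) (Real.sqrt_nonneg _)]
        exact ENNReal.ofReal_le_ofReal (hbd s)
    _ = ENNReal.ofReal (2 * r) ^ q * (∫⁻ s in Set.Icc (0:ℝ) 1, ‖gradLen f (Hmul y (hor (s * a) (s * b)))‖ₑ) ^ q := by
        rw [lintegral_const_mul _ (by have := hgc.measurable; fun_prop), ENNReal.mul_rpow_of_nonneg _ _ q0.le]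
    _ ≤ _ := by
        gcongr
        have := eLpNorm'_le_eLpNorm'_of_exponent_le (μ := volume.restrict (Set.Icc (0:ℝ) 1)) one_pos hq
          hgc.aestronglyMeasurable
        simp only [eLpNorm', ENNReal.rpow_one, one_div, inv_one] at this
        rw [ENNReal.le_rpow_inv_iff q0] at this
        exact this

/-- Key estimate. -/
lemma key_est {q r : ℝ} (hq : 1 ≤ q) (hr : 0 < r) {f : Heis → ℝ} (hf : ContDiff ℝ 1 f) {h : Heis}
    (hh : h ∈ hbox r) {ρ : Heis → ENNReal} (hρ : Measurable ρ) {A A' : Set Heis}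
    (hAm : MeasurableSet A) (hA'm : MeasurableSet A') {K : ENNReal}
    (hA : ∀ x ∈ A, ∀ k ∈ hbox (5 * r), Hmul x k ∈ A' ∧ ρ x ≤ K * ρ (Hmul x k)) :
    ∫⁻ x in A, ρ x * ‖f (Hmul x h) - f x‖ₑ ^ q ≤
      ENNReal.ofReal (10 * r) ^ q * K * ∫⁻ x in A', ρ x * eG q f x := by
  obtain ⟨a, b, ha, hb, hx⟩ := hbox_decomp hr hh
  have q0 : 0 < q := by linarith
  have hGm := measurable_eG q hf
  set I := ∫⁻ x in A', ρ x * eG q f x with hI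
  -- one shifted step
  have shift : ∀ k ∈ hbox (5 * r), ∫⁻ x in A, ρ x * eG q f (Hmul x k) ≤ K * I := by
    intro k hk
    calc ∫⁻ x in A, ρ x * eG q f (Hmul x k)
        ≤ ∫⁻ x in A, K * (A'.indicator (fun y => ρ y * eG q f y) (Hmul x k)) := by
          refine setLIntegral_mono' hAm fun x hxA => ?_
          obtain ⟨h1, h2⟩ := hA x hxA k hk
          rw [Set.indicator_of_mem h1, ← mul_assoc]
          gcongr
      _ ≤ ∫⁻ x, K * (A'.indicator (fun y => ρ y * eG q f y) (Hmul x k)) := setLIntegral_le_lintegral _ _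
      _ = K * ∫⁻ x, (A'.indicator (fun y => ρ y * eG q f y) (Hmul x k)) := by
          rw [lintegral_const_mul]
          exact ((hρ.mul hGm).indicator hA'm).comp (by fun_prop)
      _ = K * I := by
          rw [(mp_right k).lintegral_comp (f := A'.indicator (fun y => ρ y * eG q f y))
            ((hρ.mul hGm).indicator hA'm), lintegral_indicator hA'm]
  have step : ∀ k a b, k ∈ hbox (4 * r) → |a| ≤ r → |b| ≤ r →
      ∫⁻ x in A, ρ x * ‖f (Hmul (Hmul x k) (hor a b)) - f (Hmul x k)‖ₑ ^ q ≤
        ENNReal.ofReal (2 * r) ^ q * (K * I) := by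
    intro k a b hk ha hb
    have hm1 : Measurable (fun z : Heis × ℝ => ρ z.1 * eG q f (Hmul (Hmul z.1 k) (hor (z.2 * a) (z.2 * b)))) := by
      have : Measurable (fun z : Heis × ℝ => Hmul (Hmul z.1 k) (hor (z.2 * a) (z.2 * b))) := by
        unfold Hmul hor; fun_prop
      exact (hρ.comp measurable_fst).mul (hGm.comp this)
    calc ∫⁻ x in A, ρ x * ‖f (Hmul (Hmul x k) (hor a b)) - f (Hmul x k)‖ₑ ^ q
        ≤ ∫⁻ x in A, ENNReal.ofReal (2 * r) ^ q * ∫⁻ s in Set.Icc (0:ℝ) 1,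
            ρ x * eG q f (Hmul (Hmul x k) (hor (s * a) (s * b))) := by
          refine lintegral_mono fun x => ?_
          have := one_step hq hf (Hmul x k) ha hb
          rw [lintegral_const_mul]
          · refine (mul_le_mul' le_rfl this).trans (le_of_eq ?_)
            ring
          · exact hGm.comp (by unfold Hmul hor; fun_prop)
      _ = ENNReal.ofReal (2 * r) ^ q * ∫⁻ x in A, ∫⁻ s in Set.Icc (0:ℝ) 1,
            ρ x * eG q f (Hmul (Hmul x k) (hor (s * a) (s * b))) := by
          rw [lintegral_const_mul]
          exact hm1.lintegral_prod_right'
      _ = ENNReal.ofReal (2 * r) ^ q * ∫⁻ s in Set.Icc (0:ℝ) 1, ∫⁻ x in A,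
            ρ x * eG q f (Hmul (Hmul x k) (hor (s * a) (s * b))) := by
          rw [lintegral_lintegral_swap]
          exact hm1.aemeasurable
      _ ≤ ENNReal.ofReal (2 * r) ^ q * ∫⁻ s in Set.Icc (0:ℝ) 1, K * I := by
          refine mul_le_mul' le_rfl (setLIntegral_mono' measurableSet_Icc fun s hs => ?_)
          simp_rw [Hmul_assoc]
          refine shift _ ?_
          have hsr : ∀ c : ℝ, |c| ≤ r → |s * c| ≤ r := by
            intro c hc
            rw [abs_mul, abs_of_nonneg hs.1]
            nlinarith [hs.2, abs_nonneg c, hs.1]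
          have := hbox_mul hk (hor_mem (hsr a ha) (hsr b hb))
          convert this using 2
          ring
      _ = _ := by simp
  -- partial products
  set k1 := hor (a 0) (b 0) with hk1
  set k2 := Hmul k1 (hor (a 1) (b 1)) with hk2
  set k3 := Hmul k2 (hor (a 2) (b 2)) with hk3
  set k4 := Hmul k3 (hor (a 3) (b 3)) with hk4
  have m1 : k1 ∈ hbox r := hor_mem (ha 0) (hb 0)
  have m2 : k2 ∈ hbox (r + r) := hbox_mul m1 (hor_mem (ha 1) (hb 1))
  have m3 : k3 ∈ hbox (r + r + r) := hbox_mul m2 (hor_mem (ha 2) (hb 2))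
  have m4 : k4 ∈ hbox (r + r + r + r) := hbox_mul m3 (hor_mem (ha 3) (hb 3))
  have m0 : He ∈ hbox (4 * r) := by simp [hbox, He, hr.le]
  set kk : Fin 5 → Heis := ![He, k1, k2, k3, k4] with hkk
  have hkm : ∀ i, kk i ∈ hbox (4 * r) := by
    intro i
    fin_cases i
    · exact m0
    · exact hbox_mono hr.le (by linarith) m1
    · exact hbox_mono (by linarith) (by linarith) m2
    · exact hbox_mono (by linarith) (by linarith) m3
    · exact hbox_mono (by linarith) (by linarith) m4
  have hpt : ∀ x, ‖f (Hmul x h) - f x‖ₑ ^ q ≤ (5:ENNReal) ^ (q - 1) * ∑ i : Fin 5,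
      ‖f (Hmul (Hmul x (kk i)) (hor (a i) (b i))) - f (Hmul x (kk i))‖ₑ ^ q := by
    intro x
    have e : f (Hmul x h) - f x = ∑ i : Fin 5,
        (f (Hmul (Hmul x (kk i)) (hor (a i) (b i))) - f (Hmul x (kk i))) := by
      rw [hx]
      simp only [Fin.sum_univ_five, hkk]
      simp only [Fin.isValue, Matrix.cons_val_zero, Matrix.cons_val_one, Matrix.cons_val,
        Hmul_He, hk4, hk3, hk2, hk1, Hmul_assoc]
      ring
    rw [e]
    refine (ENNReal.rpow_le_rpow (enorm_sum_le _ _) q0.le).trans ?_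
    have := ENNReal.rpow_sum_le_const_mul_sum_rpow (Finset.univ : Finset (Fin 5))
      (fun i => ‖(f (Hmul (Hmul x (kk i)) (hor (a i) (b i))) - f (Hmul x (kk i)))‖ₑ) hq
    simpa using this
  have hfm := hf.continuous.measurable
  calc ∫⁻ x in A, ρ x * ‖f (Hmul x h) - f x‖ₑ ^ q
      ≤ ∫⁻ x in A, (5:ENNReal) ^ (q - 1) * ∑ i : Fin 5, ρ x *
          ‖f (Hmul (Hmul x (kk i)) (hor (a i) (b i))) - f (Hmul x (kk i))‖ₑ ^ q := by
        refine lintegral_mono fun x => ?_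
        refine (mul_le_mul' le_rfl (hpt x)).trans (le_of_eq ?_)
        rw [← Finset.mul_sum]; ring
    _ = (5:ENNReal) ^ (q - 1) * ∑ i : Fin 5, ∫⁻ x in A, ρ x *
          ‖f (Hmul (Hmul x (kk i)) (hor (a i) (b i))) - f (Hmul x (kk i))‖ₑ ^ q := by
        rw [lintegral_const_mul, lintegral_finsetSum]
        · intro i _
          unfold Hmul hor
          fun_prop
        · unfold Hmul hor
          fun_prop
    _ ≤ (5:ENNReal) ^ (q - 1) * ∑ i : Fin 5, ENNReal.ofReal (2 * r) ^ q * (K * I) := by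
        gcongr with i
        exact step _ _ _ (hkm i) (ha i) (hb i)
    _ = ENNReal.ofReal (10 * r) ^ q * K * I := by
        rw [Finset.sum_const, Finset.card_univ, Fintype.card_fin, nsmul_eq_mul]
        have : ENNReal.ofReal (10 * r) ^ q = (5:ENNReal) ^ (q - 1) * 5 * ENNReal.ofReal (2 * r) ^ q := by
          rw [show (10 * r) = 5 * (2 * r) by ring, ENNReal.ofReal_mul (by norm_num),
            ENNReal.mul_rpow_of_nonneg _ _ q0.le]
          congr 1
          have h5 : (5:ENNReal) = (5:ENNReal) ^ (1:ℝ) := by simp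
          conv_rhs => rw [mul_comm, h5, ← ENNReal.rpow_mul, one_mul, ← ENNReal.rpow_add _ _ (by norm_num) (by norm_num)]
          norm_num
        rw [this]
        push_cast
        ring

end

open MeasureTheory Real Filter
noncomputable section

/-- Density with normalisation parameter `Z`. -/
def dens (p β Z : ℝ) (x : Heis) : ENNReal := ENNReal.ofReal (Real.exp (-β * ccNorm x ^ p) / Z)

lemma continuous_dens_real {p : ℝ} (hp : 2 ≤ p) (β Z : ℝ) :
    Continuous (fun x : Heis => Real.exp (-β * ccNorm x ^ p) / Z) := by
  have h : Continuous (fun x : Heis => ccNorm x ^ p) :=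
    continuous_ccNorm.rpow_const (fun x => Or.inr (by linarith))
  fun_prop

lemma measurable_dens {p : ℝ} (hp : 2 ≤ p) (β Z : ℝ) : Measurable (dens p β Z) := by
  unfold dens
  exact (continuous_dens_real hp β Z).measurable.ennreal_ofReal

lemma dens_le {p β Z c : ℝ} (hβ : 0 < β) (hZ : 0 < Z) {x y : Heis}
    (h : ccNorm y ^ p ≤ ccNorm x ^ p + c) :
    dens p β Z x ≤ ENNReal.ofReal (Real.exp (β * c)) * dens p β Z y := by
  unfold dens
  rw [← ENNReal.ofReal_mul (Real.exp_pos _).le]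
  refine ENNReal.ofReal_le_ofReal ?_
  rw [← mul_div_assoc, ← Real.exp_add]
  gcongr
  nlinarith

lemma rpow_tangent {p a b : ℝ} (hp : 1 ≤ p) (ha : 0 < a) (hb : 0 ≤ b) :
    a ^ p + p * a ^ (p - 1) * (b - a) ≤ b ^ p := by
  have h := one_add_mul_self_le_rpow_one_add (s := b / a - 1) (by linarith [div_nonneg hb ha.le]) hp
  rw [show 1 + (b / a - 1) = b / a by ring, Real.div_rpow hb ha.le] at h
  have hap : 0 < a ^ p := Real.rpow_pos_of_pos ha p
  rw [le_div_iff₀ hap] at h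
  have : a ^ p = a ^ (p - 1) * a := by
    rw [← Real.rpow_add_one ha.ne']; ring_nf
  rw [this] at h ⊢
  refine le_trans (le_of_eq ?_) h
  field_simp

lemma q_facts {p q : ℝ} (hp : 2 ≤ p) (hpq : (p - 1) * q = p) : 1 < q ∧ q ≤ 2 := by
  constructor <;> nlinarith

lemma enorm_split {q : ℝ} (hq : 1 ≤ q) (hq2 : q ≤ 2) (a b : ℝ) :
    ‖a‖ₑ ^ q ≤ 2 * (‖b‖ₑ ^ q + ‖b - a‖ₑ ^ q) := by
  have h1 : ‖a‖ₑ ≤ ‖b‖ₑ + ‖b - a‖ₑ := by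
    have := enorm_sub_le (a := b) (b := b - a)
    simpa using this
  refine (ENNReal.rpow_le_rpow h1 (by linarith)).trans
    ((ENNReal.rpow_add_le_mul_rpow_add_rpow _ _ hq).trans ?_)
  gcongr
  calc (2:ENNReal) ^ (q - 1) ≤ 2 ^ (1:ℝ) := ENNReal.rpow_le_rpow_of_exponent_le (by norm_num) (by linarith)
    _ = 2 := by simp

/-- averaging -/
lemma avg_lemma {A B : Set Heis} (hA : MeasurableSet A) (hB : MeasurableSet B) {Φ : Heis → ENNReal}
    {Ψ : Heis × Heis → ENNReal} (hΨ : Measurable Ψ) {c D : ENNReal} (hΦm : Measurable Φ)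
    (h1 : ∀ x ∈ A, c * Φ x ≤ ∫⁻ h in B, Ψ (x, h))
    (h2 : ∀ h ∈ B, ∫⁻ x in A, Ψ (x, h) ≤ D) :
    c * ∫⁻ x in A, Φ x ≤ volume B * D := by
  calc c * ∫⁻ x in A, Φ x = ∫⁻ x in A, c * Φ x := by rw [lintegral_const_mul _ hΦm]
    _ ≤ ∫⁻ x in A, ∫⁻ h in B, Ψ (x, h) := setLIntegral_mono' hA h1
    _ = ∫⁻ h in B, ∫⁻ x in A, Ψ (x, h) := by
        rw [lintegral_lintegral_swap]
        exact hΨ.aemeasurable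
    _ ≤ ∫⁻ h in B, D := setLIntegral_mono' hB h2
    _ = volume B * D := by rw [setLIntegral_const, mul_comm]

/-- translation bound -/
lemma shift_bound {A A' : Set Heis} (hA : MeasurableSet A) (hA' : MeasurableSet A') {ρ F : Heis → ENNReal}
    (hρ : Measurable ρ) (hF : Measurable F) {K : ENNReal} {k : Heis}
    (h : ∀ x ∈ A, Hmul x k ∈ A' ∧ ρ x ≤ K * ρ (Hmul x k)) :
    ∫⁻ x in A, ρ x * F (Hmul x k) ≤ K * ∫⁻ x in A', ρ x * F x := by
  calc ∫⁻ x in A, ρ x * F (Hmul x k)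
      ≤ ∫⁻ x in A, K * (A'.indicator (fun y => ρ y * F y) (Hmul x k)) := by
        refine setLIntegral_mono' hA fun x hxA => ?_
        obtain ⟨h1, h2⟩ := h x hxA
        rw [Set.indicator_of_mem h1, ← mul_assoc]
        gcongr
    _ ≤ ∫⁻ x, K * (A'.indicator (fun y => ρ y * F y) (Hmul x k)) := setLIntegral_le_lintegral _ _
    _ = K * ∫⁻ x, (A'.indicator (fun y => ρ y * F y) (Hmul x k)) := by
        rw [lintegral_const_mul]
        exact ((hρ.mul hF).indicator hA').comp (by fun_prop)
    _ = K * ∫⁻ x in A', ρ x * F x := by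
        rw [(mp_right k).lintegral_comp (f := A'.indicator (fun y => ρ y * F y))
          ((hρ.mul hF).indicator hA'), lintegral_indicator hA']

def shell (a b : ℝ) : Set Heis := {x | a ≤ ccNorm x ∧ ccNorm x < b}

lemma shell_meas (a b : ℝ) : MeasurableSet (shell a b) :=
  (measurableSet_le measurable_const continuous_ccNorm.measurable).inter
    (measurableSet_lt continuous_ccNorm.measurable measurable_const)

lemma good_vol {r : ℝ} (hr : 0 < r) {x : Heis} (hx : r < ccNorm x) :
    ENNReal.ofReal (8 * (r / 40) ^ 4) ≤
      volume {h : Heis | h ∈ hbox (2 * r) ∧ ccNorm (Hmul x h) ≤ ccNorm x - r / 2} := by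
  obtain ⟨g, hg, hgd⟩ := ccNorm_descent hr hx
  have e := (mp_left (-g)).measure_preimage (hbox_meas (r / 40)).nullMeasurableSet
  rw [hbox_vol (by positivity)] at e
  rw [← e]
  refine measure_mono fun h hh => ?_
  simp only [Set.mem_preimage] at hh
  have e2 := Hmul_cancel_neg g h
  set k := Hmul (-g) h
  refine ⟨?_, ?_⟩
  · rw [← e2]
    exact hbox_mono (by positivity) (by linarith) (hbox_mul hg hh)
  · rw [← e2, ← Hmul_assoc]
    have := ccNorm_mul (by positivity) hh (Hmul x g)
    linarith

lemma shell_est_aux {p q β Z : ℝ} (hp : 2 ≤ p) (hpq : (p - 1) * q = p) (hβ : 0 < β) (hZ : 0 < Z)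
    {M t : ℝ} (hM : 1 ≤ M) (ht : 1 ≤ t) (htM : 200 * M ≤ t ^ p) {f : Heis → ℝ} (hf : ContDiff ℝ 1 f) :
    ∫⁻ x in shell t (2 * t), dens p β Z x * eF q f x ≤
      ENNReal.ofReal 40960000 * (2 * (ENNReal.ofReal (Real.exp (β * -(p * M * 2 ^ (-p)))) *
          ∫⁻ x in shell (t / 2) (4 * t), dens p β Z x * eF q f x) +
        2 * (ENNReal.ofReal ((20 * M) ^ q * t ^ (-p)) *
          ENNReal.ofReal (Real.exp (β * (100 * p * M * 4 ^ (p - 1)))) *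
          ∫⁻ x in shell (t / 2) (4 * t), dens p β Z x * eG q f x)) := by
  obtain ⟨hq1, hq2⟩ := q_facts hp hpq
  have t0 : 0 < t := by linarith
  have M0 : 0 < M := by linarith
  set r := M * t ^ (1 - p) with hrdef
  have htp : 0 < t ^ (1 - p) := Real.rpow_pos_of_pos t0 _
  have hr : 0 < r := by positivity
  have hrt : 200 * r ≤ t := by
    have : t = t ^ p * t ^ (1 - p) := by
      rw [← Real.rpow_add t0]; simp
    rw [this, hrdef, ← mul_assoc]
    gcongr
  have htr : t ^ (p - 1) * r = M := by
    rw [hrdef, mul_left_comm, ← Real.rpow_add t0]; simp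
  -- geometric facts
  have geo : ∀ x ∈ shell t (2 * t), ∀ k ∈ hbox (10 * r), Hmul x k ∈ shell (t / 2) (4 * t) := by
    intro x hx k hk
    have h1 := ccNorm_mul (by positivity) hk x
    have h2 := ccNorm_mul' (by positivity) hk x
    exact ⟨by linarith [hx.1], by linarith [hx.2]⟩
  have hK : ∀ x ∈ shell t (2 * t), ∀ k ∈ hbox (10 * r), dens p β Z x ≤
      ENNReal.ofReal (Real.exp (β * (100 * p * M * 4 ^ (p - 1)))) * dens p β Z (Hmul x k) := by
    intro x hx k hk
    apply dens_le hβ hZ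
    have hs := geo x hx k hk
    have h1 := ccNorm_mul (by positivity) hk x
    have hpos : 0 < ccNorm (Hmul x k) := by linarith [hs.1]
    have h3 := rpow_tangent (p := p) (by linarith) hpos (ccNorm_nonneg x)
    have h4 : ccNorm (Hmul x k) ^ (p - 1) ≤ 4 ^ (p - 1) * t ^ (p - 1) := by
      rw [← Real.mul_rpow (by norm_num) t0.le]
      exact Real.rpow_le_rpow hpos.le hs.2.le (by linarith)
    have h5 : p * ccNorm (Hmul x k) ^ (p - 1) * (ccNorm (Hmul x k) - ccNorm x) ≤ 100 * p * M * 4 ^ (p - 1) := by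
      calc p * ccNorm (Hmul x k) ^ (p - 1) * (ccNorm (Hmul x k) - ccNorm x)
          ≤ p * ccNorm (Hmul x k) ^ (p - 1) * (100 * r) := by
            have : 0 ≤ ccNorm (Hmul x k) ^ (p - 1) := by positivity
            gcongr; linarith
        _ ≤ p * (4 ^ (p - 1) * t ^ (p - 1)) * (100 * r) := by gcongr
        _ = 100 * p * (t ^ (p - 1) * r) * 4 ^ (p - 1) := by ring
        _ = _ := by rw [htr]
    linarith
  have hGain : ∀ x ∈ shell t (2 * t), ∀ h ∈ hbox (2 * r), ccNorm (Hmul x h) ≤ ccNorm x - r / 2 →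
      dens p β Z x ≤ ENNReal.ofReal (Real.exp (β * -(p * M * 2 ^ (-p)))) * dens p β Z (Hmul x h) := by
    intro x hx h hh hd
    apply dens_le hβ hZ
    have hs := geo x hx h (hbox_mono (by positivity) (by linarith) hh)
    have hpos : 0 < ccNorm (Hmul x h) := by linarith [hs.1]
    have h3 := rpow_tangent (p := p) (by linarith) hpos (ccNorm_nonneg x)
    have h4 : t ^ (p - 1) * (1 / 2) ^ (p - 1) ≤ ccNorm (Hmul x h) ^ (p - 1) := by
      rw [← Real.mul_rpow t0.le (by norm_num)]
      exact Real.rpow_le_rpow (by positivity) (by linarith [hs.1]) (by linarith)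
    have h6 : (2:ℝ) ^ (-p) = (1 / 2) ^ (p - 1) * (1 / 2) := by
      rw [← Real.rpow_add_one (by norm_num), one_div, Real.inv_rpow (by norm_num), Real.rpow_neg (by norm_num)]
      ring_nf
    have h5 : p * M * 2 ^ (-p) ≤ p * ccNorm (Hmul x h) ^ (p - 1) * (ccNorm x - ccNorm (Hmul x h)) := by
      calc p * M * 2 ^ (-p) = p * (t ^ (p - 1) * (1 / 2) ^ (p - 1)) * (r / 2) := by
            rw [h6, ← htr]; ring
        _ ≤ p * ccNorm (Hmul x h) ^ (p - 1) * (r / 2) := by gcongr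
        _ ≤ _ := by
            have : 0 ≤ ccNorm (Hmul x h) ^ (p - 1) := by positivity
            gcongr; linarith
    linarith
  have hρ := measurable_dens hp β Z
  have hFm := measurable_eF q hf
  have hfm := hf.continuous.measurable
  have hdm := continuous_ccNorm.measurable
  set a' := ∫⁻ x in shell (t / 2) (4 * t), dens p β Z x * eF q f x
  set G' := ∫⁻ x in shell (t / 2) (4 * t), dens p β Z x * eG q f x
  set E : Set (Heis × Heis) := {z | ccNorm (Hmul z.1 z.2) ≤ ccNorm z.1 - r / 2} with hE
  have hEm : MeasurableSet E := by
    refine measurableSet_le (hdm.comp continuous_Hmul.measurable) ?_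
    exact (hdm.comp measurable_fst).sub measurable_const
  set Ψ : Heis × Heis → ENNReal := E.indicator (fun z => dens p β Z z.1 *
    (2 * (eF q f (Hmul z.1 z.2) + ‖f (Hmul z.1 z.2) - f z.1‖ₑ ^ q))) with hΨ
  have hΨm : Measurable Ψ := by
    refine Measurable.indicator ?_ hEm
    refine (hρ.comp measurable_fst).mul (measurable_const.mul (Measurable.add ?_ ?_))
    · exact hFm.comp continuous_Hmul.measurable
    · have : Measurable (fun z : Heis × Heis => f (Hmul z.1 z.2) - f z.1) :=
        (hfm.comp continuous_Hmul.measurable).sub (hfm.comp measurable_fst)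
      exact this.enorm.pow_const q
  have key := avg_lemma (A := shell t (2 * t)) (B := hbox (2 * r)) (shell_meas _ _) (hbox_meas _)
    (Φ := fun x => dens p β Z x * eF q f x) hΨm (c := ENNReal.ofReal (8 * (r / 40) ^ 4))
    (D := 2 * (ENNReal.ofReal (Real.exp (β * -(p * M * 2 ^ (-p)))) * a') +
        2 * (ENNReal.ofReal ((20 * M) ^ q * t ^ (-p)) *
          ENNReal.ofReal (Real.exp (β * (100 * p * M * 4 ^ (p - 1)))) * G')) (hρ.mul hFm) ?_ ?_
  · have hvol : volume (hbox (2 * r)) = ENNReal.ofReal (8 * (r / 40) ^ 4) * ENNReal.ofReal 40960000 := by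
      rw [hbox_vol (by positivity), ← ENNReal.ofReal_mul (by positivity)]
      congr 1; ring
    rw [hvol, mul_assoc] at key
    rwa [ENNReal.mul_le_mul_iff_right] at key
    · simp; positivity
    · exact ENNReal.ofReal_ne_top
  · intro x hx
    have hgv := good_vol hr (x := x) (by linarith [hx.1])
    set Gd := {h : Heis | h ∈ hbox (2 * r) ∧ ccNorm (Hmul x h) ≤ ccNorm x - r / 2} with hGd
    have hGdm : MeasurableSet Gd := by
      refine (hbox_meas _).inter (measurableSet_le (hdm.comp ?_) measurable_const)
      exact continuous_Hmul.measurable.comp (measurable_const.prodMk measurable_id)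
    calc _ ≤ volume Gd * (dens p β Z x * eF q f x) := by gcongr
      _ = ∫⁻ h in Gd, dens p β Z x * eF q f x := by rw [setLIntegral_const, mul_comm]
      _ ≤ ∫⁻ h in Gd, Ψ (x, h) := by
          refine setLIntegral_mono' hGdm fun h hh => ?_
          rw [hΨ, Set.indicator_of_mem (show (x, h) ∈ E from hh.2)]
          gcongr
          exact enorm_split hq1.le hq2 _ _
      _ ≤ ∫⁻ h in hbox (2 * r), Ψ (x, h) := lintegral_mono_set (fun h hh => hh.1)
  · intro h hh
    set Ah := {x | x ∈ shell t (2 * t) ∧ ccNorm (Hmul x h) ≤ ccNorm x - r / 2} with hAh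
    have hAhm : MeasurableSet Ah :=
      (shell_meas _ _).inter (measurableSet_le (hdm.comp (by fun_prop)) (hdm.sub measurable_const))
    have hb := hbox_mono (s := 10 * r) (by positivity) (by linarith) hh
    have k1 : ∫⁻ x in Ah, dens p β Z x * eF q f (Hmul x h) ≤
        ENNReal.ofReal (Real.exp (β * -(p * M * 2 ^ (-p)))) * a' := by
      refine shift_bound hAhm (shell_meas _ _) hρ hFm fun x hx => ⟨geo x hx.1 h hb, hGain x hx.1 h hh hx.2⟩
    have k2 := key_est hq1.le (by positivity) hf hh hρ (shell_meas t (2 * t)) (shell_meas (t / 2) (4 * t))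
      (K := ENNReal.ofReal (Real.exp (β * (100 * p * M * 4 ^ (p - 1)))))
      (fun x hx k hk => by
        have hk' : k ∈ hbox (10 * r) := by convert hk using 2; ring
        exact ⟨geo x hx k hk', hK x hx k hk'⟩)
    have e : ENNReal.ofReal (10 * (2 * r)) ^ q = ENNReal.ofReal ((20 * M) ^ q * t ^ (-p)) := by
      rw [ENNReal.ofReal_rpow_of_nonneg (by positivity) (by linarith)]
      congr 1
      rw [show 10 * (2 * r) = (20 * M) * t ^ (1 - p) by rw [hrdef]; ring,
        Real.mul_rpow (by positivity) (by positivity), ← Real.rpow_mul t0.le]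
      congr 2; linarith
    rw [e] at k2
    have hm1 : Measurable (fun x => dens p β Z x * eF q f (Hmul x h)) := hρ.mul (hFm.comp (by fun_prop))
    calc ∫⁻ x in shell t (2 * t), Ψ (x, h)
        = ∫⁻ x in Ah, (2 * (dens p β Z x * eF q f (Hmul x h)) +
            2 * (dens p β Z x * ‖f (Hmul x h) - f x‖ₑ ^ q)) := by
          rw [hAh, Set.setOf_and, Set.inter_comm, ← setLIntegral_indicator]
          · simp only [Set.setOf_mem_eq]
            refine lintegral_congr fun x => ?_
            simp only [hΨ, Set.indicator, hE, Set.mem_setOf_eq]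
            split_ifs <;> ring
          · exact measurableSet_le (hdm.comp (by fun_prop)) (hdm.sub measurable_const)
      _ = 2 * (∫⁻ x in Ah, dens p β Z x * eF q f (Hmul x h)) +
            2 * ∫⁻ x in Ah, dens p β Z x * ‖f (Hmul x h) - f x‖ₑ ^ q := by
          rw [lintegral_add_left (hm1.const_mul _), lintegral_const_mul _ hm1, lintegral_const_mul]
          exact hρ.mul (by fun_prop)
      _ ≤ _ := by
          refine add_le_add (mul_le_mul' le_rfl k1) (mul_le_mul' le_rfl (le_trans ?_ k2))
          exact lintegral_mono_set (fun x hx => hx.1)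

lemma shell_est {p q β Z : ℝ} (hp : 2 ≤ p) (hpq : (p - 1) * q = p) (hβ : 0 < β) (hZ : 0 < Z)
    {η : ℝ} (hη : 0 < η) : ∃ A : ℝ, 0 ≤ A ∧ ∃ T0 : ℝ, 1 ≤ T0 ∧ ∀ t, T0 ≤ t → ∀ f : Heis → ℝ,
    ContDiff ℝ 1 f →
    ∫⁻ x in shell t (2 * t), dens p β Z x * eF q f x ≤
      ENNReal.ofReal (A * t ^ (-p)) * (∫⁻ x in shell (t / 2) (4 * t), dens p β Z x * eG q f x) +
      ENNReal.ofReal η * (∫⁻ x in shell (t / 2) (4 * t), dens p β Z x * eF q f x) := by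
  obtain ⟨M, hM1, hM⟩ : ∃ M : ℝ, 1 ≤ M ∧ 40960000 * (2 * Real.exp (β * -(p * M * 2 ^ (-p)))) ≤ η := by
    have h1 : Tendsto (fun M : ℝ => 40960000 * (2 * Real.exp (-((β * (p * 2 ^ (-p))) * M)))) atTop
        (nhds (40960000 * (2 * 0))) := by
      refine Tendsto.const_mul _ (Tendsto.const_mul _ ?_)
      refine (Real.tendsto_exp_neg_atTop_nhds_zero).comp ?_
      exact tendsto_id.const_mul_atTop (by positivity)
    have h2 := h1.eventually_le_const (u := η) (by simpa using hη)
    obtain ⟨M, hM, hM1⟩ := (h2.and (eventually_ge_atTop 1)).exists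
    refine ⟨M, hM1, ?_⟩
    have e : β * -(p * M * 2 ^ (-p)) = -(β * (p * 2 ^ (-p)) * M) := by ring
    rw [e]; exact hM
  refine ⟨40960000 * (2 * ((20 * M) ^ q * Real.exp (β * (100 * p * M * 4 ^ (p - 1))))), by positivity, 200 * M,
    by linarith, fun t ht f hf => ?_⟩
  have ht1 : 1 ≤ t := by linarith
  have hb := shell_est_aux hp hpq hβ hZ hM1 ht1 (by
    calc 200 * M ≤ t := ht
      _ = t ^ (1:ℝ) := by simp
      _ ≤ t ^ p := Real.rpow_le_rpow_of_exponent_le ht1 (by linarith)) hf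
  refine hb.trans ?_
  have htp : 0 ≤ t ^ (-p) := by positivity
  rw [mul_add, add_comm]
  refine add_le_add (le_of_eq ?_) ?_
  · rw [show (2:ENNReal) = ENNReal.ofReal 2 by simp, ← ENNReal.ofReal_mul (by positivity), ← mul_assoc, ← mul_assoc,
      ← ENNReal.ofReal_mul (by positivity), ← ENNReal.ofReal_mul (by positivity)]
    congr 2; ring
  · rw [show (2:ENNReal) = ENNReal.ofReal 2 by simp, ← mul_assoc, ← mul_assoc,
      ← ENNReal.ofReal_mul (by positivity), ← ENNReal.ofReal_mul (by positivity)]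
    gcongr
    linarith

end

open MeasureTheory Real Filter
noncomputable section

def tail (T : ℝ) : Set Heis := {x | T ≤ ccNorm x}

lemma tail_meas (T : ℝ) : MeasurableSet (tail T) :=
  measurableSet_le measurable_const continuous_ccNorm.measurable

lemma tail_dyadic {s : ℝ} (hs : 0 < s) : tail s = ⋃ j : ℕ, shell (2 ^ j * s) (2 ^ (j + 1) * s) := by
  ext x
  simp only [Set.mem_iUnion]
  constructor
  · intro hx
    have hx : s ≤ ccNorm x := hx
    obtain ⟨n, h1, h2⟩ := exists_nat_pow_near (x := ccNorm x / s) (y := 2)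
      (by rwa [le_div_iff₀ hs, one_mul]) (by norm_num)
    exact ⟨n, by rwa [le_div_iff₀ hs] at h1, by rwa [div_lt_iff₀ hs] at h2⟩
  · rintro ⟨j, h1, -⟩
    have : (1:ℝ) ≤ 2 ^ j := one_le_pow₀ (by norm_num)
    show s ≤ ccNorm x
    nlinarith

lemma shell_disj {s : ℝ} (hs : 0 < s) :
    Pairwise (Function.onFun Disjoint (fun j : ℕ => shell (2 ^ j * s) (2 ^ (j + 1) * s))) := by
  have key : ∀ i j : ℕ, i < j → Disjoint (shell (2 ^ i * s) (2 ^ (i + 1) * s)) (shell (2 ^ j * s) (2 ^ (j + 1) * s)) := by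
    intro i j hij
    rw [Set.disjoint_left]
    rintro x ⟨-, h2⟩ ⟨h3, -⟩
    have : (2:ℝ) ^ (i + 1) ≤ 2 ^ j := pow_le_pow_right₀ (by norm_num) hij
    nlinarith
  intro i j hij
  rcases lt_or_gt_of_ne hij with h | h
  · exact key i j h
  · exact (key j i h).symm

lemma tail_sum {s : ℝ} (hs : 0 < s) (H : Heis → ENNReal) :
    ∑' j : ℕ, ∫⁻ x in shell (2 ^ j * s) (2 ^ (j + 1) * s), H x = ∫⁻ x in tail s, H x := by
  rw [tail_dyadic hs, lintegral_iUnion (fun j => shell_meas _ _) (shell_disj hs)]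

lemma overlap {T : ℝ} (hT : 0 < T) (H : Heis → ENNReal) :
    ∑' j : ℕ, ∫⁻ x in shell ((2 ^ j * T) / 2) (4 * (2 ^ j * T)), H x ≤ 3 * ∫⁻ x in tail (T / 2), H x := by
  have mono : ∀ s, T / 2 ≤ s → ∫⁻ x in tail s, H x ≤ ∫⁻ x in tail (T / 2), H x :=
    fun s hs => lintegral_mono_set (fun x hx => hs.trans hx)
  calc ∑' j : ℕ, ∫⁻ x in shell ((2 ^ j * T) / 2) (4 * (2 ^ j * T)), H x
      ≤ ∑' j : ℕ, ((∫⁻ x in shell (2 ^ j * (T / 2)) (2 ^ (j + 1) * (T / 2)), H x) +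
          (∫⁻ x in shell (2 ^ j * T) (2 ^ (j + 1) * T), H x) +
          ∫⁻ x in shell (2 ^ j * (2 * T)) (2 ^ (j + 1) * (2 * T)), H x) := by
        refine ENNReal.tsum_le_tsum fun j => ?_
        refine (lintegral_mono_set ?_).trans ((lintegral_union_le _ _ _).trans
          (add_le_add (lintegral_union_le _ _ _) le_rfl))
        rintro x ⟨h1, h2⟩
        simp only [Set.mem_union]
        by_cases c1 : ccNorm x < 2 ^ j * T
        · exact Or.inl (Or.inl ⟨by linarith, by rw [pow_succ]; linarith⟩)
        · by_cases c2 : ccNorm x < 2 ^ (j + 1) * T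
          · exact Or.inl (Or.inr ⟨by linarith, c2⟩)
          · rw [pow_succ] at c2
            exact Or.inr ⟨by linarith, by rw [pow_succ]; linarith⟩
    _ = (∫⁻ x in tail (T / 2), H x) + (∫⁻ x in tail T, H x) + ∫⁻ x in tail (2 * T), H x := by
        rw [ENNReal.tsum_add, ENNReal.tsum_add, tail_sum (by positivity), tail_sum hT, tail_sum (by positivity)]
    _ ≤ _ := by
        have h1 := mono T (by linarith)
        have h2 := mono (2 * T) (by linarith)
        refine (add_le_add (add_le_add le_rfl h1) h2).trans (le_of_eq ?_)
        ring

lemma U_bound {p q β Z : ℝ} (hp : 2 ≤ p) (hpq : (p - 1) * q = p) (hβ : 0 < β) (hZ : 0 < Z) :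
    ∃ K : ℝ, 0 < K ∧ ∀ T, 0 < T → ∀ f : Heis → ℝ, ContDiff ℝ 1 f →
    ∫⁻ x in tail T, dens p β Z x * eF q f x ≤ ENNReal.ofReal (K * T ^ (-p)) *
      ((∫⁻ x, dens p β Z x * eG q f x) + ∫⁻ x, dens p β Z x * eF q f x) := by
  obtain ⟨A, hA, T0, hT0, hs⟩ := shell_est hp hpq hβ hZ (η := (2:ℝ) ^ (-p) / 6) (by positivity)
  have T00 : 0 < T0 := by linarith
  refine ⟨T0 ^ p + 6 * A, by positivity, ?_⟩
  set K := T0 ^ p + 6 * A with hK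
  suffices H : ∀ n : ℕ, ∀ T, 0 < T → T ≤ 2 ^ n * T0 → ∀ f : Heis → ℝ, ContDiff ℝ 1 f →
    ∫⁻ x in tail T, dens p β Z x * eF q f x ≤ ENNReal.ofReal (K * T ^ (-p)) *
      ((∫⁻ x, dens p β Z x * eG q f x) + ∫⁻ x, dens p β Z x * eF q f x) by
    intro T hT f hf
    obtain ⟨n, hn⟩ := pow_unbounded_of_one_lt (T / T0) (show (1:ℝ) < 2 by norm_num)
    exact H n T hT (by rw [div_lt_iff₀ T00] at hn; exact hn.le) f hf
  have base : ∀ T, 0 < T → T ≤ T0 → ∀ f : Heis → ℝ, ContDiff ℝ 1 f →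
    ∫⁻ x in tail T, dens p β Z x * eF q f x ≤ ENNReal.ofReal (K * T ^ (-p)) *
      ((∫⁻ x, dens p β Z x * eG q f x) + ∫⁻ x, dens p β Z x * eF q f x) := by
    intro T hT hTT f hf
    have h1 : 1 ≤ K * T ^ (-p) := by
      rw [Real.rpow_neg hT.le, ← div_eq_mul_inv, le_div_iff₀ (by positivity), one_mul]
      have := Real.rpow_le_rpow hT.le hTT (by linarith : 0 ≤ p)
      linarith
    calc ∫⁻ x in tail T, dens p β Z x * eF q f x ≤ ∫⁻ x, dens p β Z x * eF q f x := setLIntegral_le_lintegral _ _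
      _ ≤ 1 * ((∫⁻ x, dens p β Z x * eG q f x) + ∫⁻ x, dens p β Z x * eF q f x) := by
          rw [one_mul]; exact le_add_self
      _ ≤ _ := by gcongr; simpa using h1
  intro n
  induction n with
  | zero => intro T hT hTT; exact base T hT (by simpa using hTT)
  | succ n ih =>
    intro T hT hTT f hf
    by_cases hc : T ≤ T0
    · exact base T hT hc f hf
    push Not at hc
    have ih' := ih (T / 2) (by positivity) (by rw [pow_succ] at hTT; linarith) f hf
    set G := ∫⁻ x, dens p β Z x * eG q f x
    set F := ∫⁻ x, dens p β Z x * eF q f x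
    have hTp : 0 < T ^ (-p) := Real.rpow_pos_of_pos hT _
    calc ∫⁻ x in tail T, dens p β Z x * eF q f x
        = ∑' j : ℕ, ∫⁻ x in shell (2 ^ j * T) (2 ^ (j + 1) * T), dens p β Z x * eF q f x := (tail_sum hT _).symm
      _ ≤ ∑' j : ℕ, (ENNReal.ofReal (A * T ^ (-p)) *
            (∫⁻ x in shell ((2 ^ j * T) / 2) (4 * (2 ^ j * T)), dens p β Z x * eG q f x) +
          ENNReal.ofReal (2 ^ (-p) / 6) *
            (∫⁻ x in shell ((2 ^ j * T) / 2) (4 * (2 ^ j * T)), dens p β Z x * eF q f x)) := by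
          refine ENNReal.tsum_le_tsum fun j => ?_
          have h1 : (1:ℝ) ≤ 2 ^ j := one_le_pow₀ (by norm_num)
          have hT2 : T ≤ 2 ^ j * T := by nlinarith
          have := hs (2 ^ j * T) (by linarith) f hf
          rw [show (2:ℝ) ^ (j + 1) * T = 2 * (2 ^ j * T) by rw [pow_succ]; ring]
          refine this.trans ?_
          gcongr ENNReal.ofReal (A * ?_) * _ + _
          exact Real.rpow_le_rpow_of_nonpos hT hT2 (by linarith)
      _ ≤ ENNReal.ofReal (A * T ^ (-p)) * (3 * G) + ENNReal.ofReal (2 ^ (-p) / 6) * (3 *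
            (ENNReal.ofReal (K * (T / 2) ^ (-p)) * (G + F))) := by
          rw [ENNReal.tsum_add, ENNReal.tsum_mul_left, ENNReal.tsum_mul_left]
          refine add_le_add (mul_le_mul' le_rfl ((overlap hT _).trans ?_))
            (mul_le_mul' le_rfl ((overlap hT _).trans (mul_le_mul' le_rfl ih')))
          gcongr
          exact setLIntegral_le_lintegral _ _
      _ ≤ ENNReal.ofReal (3 * A * T ^ (-p)) * (G + F) + ENNReal.ofReal (K / 2 * T ^ (-p)) * (G + F) := by
          refine add_le_add ?_ (le_of_eq ?_)
          · rw [show 3 * A * T ^ (-p) = (A * T ^ (-p)) * 3 by ring,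
              ENNReal.ofReal_mul (p := A * T ^ (-p)) (by positivity), mul_assoc]
            refine mul_le_mul' le_rfl (mul_le_mul' (by simp) le_self_add)
          · rw [show K / 2 * T ^ (-p) = (2 ^ (-p) / 6) * (3 * (K * (T / 2) ^ (-p))) from ?_,
              ENNReal.ofReal_mul (p := 2 ^ (-p) / 6) (by positivity),
              ENNReal.ofReal_mul (p := 3) (by positivity), mul_assoc, mul_assoc]
            · simp
            · rw [Real.div_rpow hT.le (by norm_num)]
              have : (0:ℝ) < 2 ^ (-p) := by positivity
              field_simp
              ring
      _ = ENNReal.ofReal ((3 * A + K / 2) * T ^ (-p)) * (G + F) := by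
          rw [← add_mul, ← ENNReal.ofReal_add (by positivity) (by positivity), add_mul]
      _ ≤ _ := by
          gcongr
          have : 0 ≤ T0 ^ p := by positivity
          linarith

end

open MeasureTheory Real Filter
noncomputable section

lemma gradLen_sub_const (f : Heis → ℝ) (a : ℝ) : gradLen (fun x => f x - a) = gradLen f := by
  funext x
  simp [gradLen, X1, X2, fderiv_sub_const]

lemma eG_sub_const (q : ℝ) (f : Heis → ℝ) (a : ℝ) : eG q (fun x => f x - a) = eG q f := by
  funext x; simp [eG, gradLen_sub_const]

lemma local_poincare {p q β Z : ℝ} (hp : 2 ≤ p) (hpq : (p - 1) * q = p) (hβ : 0 < β) (hZ : 0 < Z)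
    {S : ℝ} (hS : 0 < S) : ∃ C : ℝ, 0 < C ∧ ∀ f : Heis → ℝ, ContDiff ℝ 1 f → ∃ a : ℝ,
    ∫⁻ x in hbox S, dens p β Z x * eF q (fun x => f x - a) x ≤
      ENNReal.ofReal C * ∫⁻ x, dens p β Z x * eG q f x := by
  obtain ⟨hq1, hq2⟩ := q_facts hp hpq
  refine ⟨16 * ((20 * S) ^ q * Real.exp (β * (110 * S) ^ p)), by positivity, fun f hf => ?_⟩
  have hρ := measurable_dens hp β Z
  have hfm := hf.continuous.measurable
  set G := ∫⁻ x, dens p β Z x * eG q f x with hG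
  have hΨm : Measurable (fun z : Heis × Heis => dens p β Z z.1 * ‖f (Hmul z.1 z.2) - f z.1‖ₑ ^ q) := by
    have : Measurable (fun z : Heis × Heis => f (Hmul z.1 z.2) - f z.1) :=
      (hfm.comp continuous_Hmul.measurable).sub (hfm.comp measurable_fst)
    exact (hρ.comp measurable_fst).mul (this.enorm.pow_const q)
  have hm2 : Measurable (fun z : Heis × Heis => dens p β Z z.1 * ‖f z.2 - f z.1‖ₑ ^ q) := by
    have : Measurable (fun z : Heis × Heis => f z.2 - f z.1) :=
      (hfm.comp measurable_snd).sub (hfm.comp measurable_fst)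
    exact (hρ.comp measurable_fst).mul (this.enorm.pow_const q)
  have key := avg_lemma (A := hbox S) (B := hbox (2 * S)) (hbox_meas _) (hbox_meas _)
    (Φ := fun x => ∫⁻ y in hbox S, dens p β Z x * ‖f y - f x‖ₑ ^ q) hΨm (c := 1)
    (D := ENNReal.ofReal ((20 * S) ^ q * Real.exp (β * (110 * S) ^ p)) * G)
    hm2.lintegral_prod_right' ?_ ?_
  · rw [one_mul, lintegral_lintegral_swap hm2.aemeasurable] at key
    have hv0 : volume (hbox S) ≠ 0 := by
      rw [hbox_vol hS.le]; simp; positivity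
    have hv1 : volume (hbox S) ≠ ⊤ := by rw [hbox_vol hS.le]; exact ENNReal.ofReal_ne_top
    obtain ⟨y, -, hy⟩ := exists_le_setLAverage (μ := (volume : Measure Heis)) (s := hbox S)
      (f := fun y => ∫⁻ x in hbox S, dens p β Z x * ‖f y - f x‖ₑ ^ q) hv0 hv1
      (hm2.lintegral_prod_left').aemeasurable
    refine ⟨f y, ?_⟩
    have e : ∫⁻ x in hbox S, dens p β Z x * eF q (fun x => f x - f y) x =
        ∫⁻ x in hbox S, dens p β Z x * ‖f y - f x‖ₑ ^ q := by
      refine lintegral_congr fun x => ?_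
      rw [eF, ← enorm_neg, neg_sub]
    rw [e]
    refine hy.trans ?_
    rw [setLAverage_eq]
    refine (ENNReal.div_le_div_right key _).trans ?_
    have hvol : volume (hbox (2 * S)) = volume (hbox S) * ENNReal.ofReal 16 := by
      rw [hbox_vol hS.le, hbox_vol (by positivity), ← ENNReal.ofReal_mul (by positivity)]
      congr 1; ring
    rw [hvol, mul_assoc, mul_comm, ENNReal.mul_div_cancel_right hv0 hv1, ← mul_assoc,
      ← ENNReal.ofReal_mul (by norm_num)]
  · intro x hx
    rw [one_mul]
    have e1 := (mp_left x).lintegral_comp (f := (hbox S).indicator (fun y => dens p β Z x * ‖f y - f x‖ₑ ^ q))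
      (Measurable.indicator (by fun_prop) (hbox_meas S))
    rw [← lintegral_indicator (hbox_meas S), ← e1, ← lintegral_indicator (hbox_meas _)]
    refine lintegral_mono fun h => ?_
    by_cases hm : Hmul x h ∈ hbox S
    · have hh : h ∈ hbox (2 * S) := by
        have := hbox_mul (hbox_neg hx) hm
        rw [Hmul_neg_cancel] at this
        convert this using 2; ring
      rw [Set.indicator_of_mem hm, Set.indicator_of_mem hh]
    · rw [Set.indicator_of_notMem hm]; exact zero_le
  · intro h hh
    have k := key_est hq1.le (by positivity) hf hh hρ (hbox_meas S) MeasurableSet.univ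
      (K := ENNReal.ofReal (Real.exp (β * (110 * S) ^ p))) (fun x hx k hk => ⟨trivial, ?_⟩)
    · rw [Measure.restrict_univ] at k
      refine k.trans (le_of_eq ?_)
      rw [ENNReal.ofReal_rpow_of_nonneg (by positivity) (by linarith), ← ENNReal.ofReal_mul (by positivity)]
      congr 4; ring
    · apply dens_le hβ hZ
      have h1 := ccNorm_hbox (by positivity) (hbox_mul hx hk)
      have h2 := Real.rpow_le_rpow (ccNorm_nonneg _) (h1.trans (le_of_eq (show _ = 110 * S by ring))) (by linarith : 0 ≤ p)
      have h3 : 0 ≤ ccNorm x ^ p := Real.rpow_nonneg (ccNorm_nonneg x) _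
      linarith

lemma absorb {C : ℝ} (hC : 0 < C) {N G : ENNReal} (hgfin : N ≠ ⊤)
    (h2 : N ≤ ENNReal.ofReal C * G + ENNReal.ofReal (1 / 2) * (G + N)) :
    N ≤ ENNReal.ofReal (2 * C + 1) * G := by
  by_cases hGt : G = ⊤
  · rw [hGt, ENNReal.mul_top (by simp; positivity)]; exact le_top
  lift G to NNReal using hGt
  lift N to NNReal using hgfin
  rw [ENNReal.ofReal, ENNReal.ofReal] at h2
  rw [ENNReal.ofReal]
  norm_cast at h2 ⊢
  rw [← NNReal.coe_le_coe] at h2 ⊢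
  push_cast at h2 ⊢
  rw [Real.coe_toNNReal _ (by positivity), Real.coe_toNNReal _ (by positivity)] at h2
  rw [Real.coe_toNNReal _ (by positivity)]
  linarith

lemma split_lt_tail (T : ℝ) (H : Heis → ENNReal) :
    ∫⁻ x, H x = (∫⁻ x in (tail T)ᶜ, H x) + ∫⁻ x in tail T, H x := by
  rw [add_comm, lintegral_add_compl _ (tail_meas T)]

lemma poincare {p q β Z : ℝ} (hp : 2 ≤ p) (hpq : (p - 1) * q = p) (hβ : 0 < β) (hZ : 0 < Z)
    (hmass : ∫⁻ x, dens p β Z x = 1) : ∃ C : ℝ, 0 < C ∧ ∀ f : Heis → ℝ, ContDiff ℝ 1 f →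
    (∫⁻ x, dens p β Z x * eF q f x) ≠ ⊤ → ∃ a : ℝ,
    (∫⁻ x, dens p β Z x * eF q (fun x => f x - a) x) ≠ ⊤ ∧
    ∫⁻ x, dens p β Z x * eF q (fun x => f x - a) x ≤
      ENNReal.ofReal C * ∫⁻ x, dens p β Z x * eG q f x := by
  obtain ⟨hq1, hq2⟩ := q_facts hp hpq
  obtain ⟨K, hK, hU⟩ := U_bound hp hpq hβ hZ
  obtain ⟨T, hT, hKT⟩ : ∃ T : ℝ, 0 < T ∧ K * T ^ (-p) ≤ 1 / 2 := by
    refine ⟨(2 * K) ^ (1 / p), by positivity, ?_⟩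
    rw [← Real.rpow_mul (by positivity), show 1 / p * -p = -1 by field_simp, Real.rpow_neg_one]
    apply le_of_eq; field_simp
  obtain ⟨C, hC, hloc⟩ := local_poincare hp hpq hβ hZ hT
  refine ⟨2 * C + 1, by positivity, fun f hf hfin => ?_⟩
  obtain ⟨a, ha⟩ := hloc f hf
  have hg : ContDiff ℝ 1 (fun x => f x - a) := hf.sub contDiff_const
  have hρ := measurable_dens hp β Z
  have hFm := measurable_eF q hf
  have hgfin : (∫⁻ x, dens p β Z x * eF q (fun x => f x - a) x) ≠ ⊤ := by
    refine ne_top_of_le_ne_top (b := 2 * ((∫⁻ x, dens p β Z x * eF q f x) + ‖a‖ₑ ^ q)) ?_ ?_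
    · refine ENNReal.mul_ne_top (by norm_num) (ENNReal.add_ne_top.2 ⟨hfin, ?_⟩)
      exact ENNReal.rpow_ne_top_of_nonneg (by linarith) enorm_ne_top
    · calc ∫⁻ x, dens p β Z x * eF q (fun x => f x - a) x
          ≤ ∫⁻ x, 2 * (dens p β Z x * eF q f x + dens p β Z x * ‖a‖ₑ ^ q) := by
            refine lintegral_mono fun x => ?_
            have := enorm_split hq1.le hq2 (f x - a) (f x)
            rw [sub_sub_cancel] at this
            refine (mul_le_mul' le_rfl this).trans (le_of_eq ?_)
            simp only [eF]; ring
        _ = _ := by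
            have hm1 : Measurable (fun x => dens p β Z x * eF q f x) := hρ.mul hFm
            have hm2 : Measurable (fun x => dens p β Z x * eF q f x + dens p β Z x * ‖a‖ₑ ^ q) :=
              hm1.add (hρ.mul_const _)
            rw [lintegral_const_mul _ hm2, lintegral_add_left hm1, lintegral_mul_const _ hρ, hmass, one_mul]
  refine ⟨a, hgfin, ?_⟩
  have h1 := hU T hT _ hg
  rw [eG_sub_const] at h1
  set G := ∫⁻ x, dens p β Z x * eG q f x
  set N := ∫⁻ x, dens p β Z x * eF q (fun x => f x - a) x with hN
  have h2 : N ≤ ENNReal.ofReal C * G + ENNReal.ofReal (1 / 2) * (G + N) := by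
    conv_lhs => rw [hN, split_lt_tail T]
    refine add_le_add (le_trans (lintegral_mono_set ?_) ha) (h1.trans (by gcongr))
    intro x hx
    refine mem_hbox_of_ccNorm ?_
    by_contra hcon
    exact hx (not_lt.1 hcon)
  exact absorb hC hgfin h2

end

open MeasureTheory Real Filter
noncomputable section

lemma FK_aux {p q β Z : ℝ} (hp : 2 ≤ p) (hpq : (p - 1) * q = p) (hβ : 0 < β) (hZ : 0 < Z)
    {T v : ℝ} (hT : 1 ≤ T) (hv : v ≤ 4 * (T ^ (1 - p) / 100) ^ 4) {g : Heis → ℝ} (hg : ContDiff ℝ 1 g)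
    (hvol : volume {x | g x ≠ 0 ∧ ccNorm x ≤ 2 * T} ≤ ENNReal.ofReal v) :
    ∫⁻ x in (tail T)ᶜ, dens p β Z x * eF q g x ≤
      ENNReal.ofReal (2 * Real.exp (β * (p * 2 ^ (p - 1))) * T ^ (-p)) *
        ∫⁻ x, dens p β Z x * eG q g x := by
  obtain ⟨hq1, hq2⟩ := q_facts hp hpq
  have T0 : 0 < T := by linarith
  set r := T ^ (1 - p) / 100 with hrdef
  have htp : 0 < T ^ (1 - p) := Real.rpow_pos_of_pos T0 _
  have hr : 0 < r := by positivity
  have hr1 : r ≤ 1 / 100 := by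
    have : T ^ (1 - p) ≤ 1 := Real.rpow_le_one_of_one_le_of_nonpos hT (by linarith)
    rw [hrdef]; linarith
  have htr : T ^ (p - 1) * r = 1 / 100 := by
    rw [hrdef, ← mul_div_assoc, ← Real.rpow_add T0]; simp
  have hρ := measurable_dens hp β Z
  have hFm := measurable_eF q hg
  have hgm := hg.continuous.measurable
  have hdm := continuous_ccNorm.measurable
  set G := ∫⁻ x, dens p β Z x * eG q g x with hG
  have hmem : ∀ x ∈ (tail T)ᶜ, ccNorm x < T := fun x hx => not_le.1 hx
  have hΨm : Measurable (fun z : Heis × Heis => dens p β Z z.1 * ‖g (Hmul z.1 z.2) - g z.1‖ₑ ^ q) := by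
    have : Measurable (fun z : Heis × Heis => g (Hmul z.1 z.2) - g z.1) :=
      (hgm.comp continuous_Hmul.measurable).sub (hgm.comp measurable_fst)
    exact (hρ.comp measurable_fst).mul (this.enorm.pow_const q)
  have key := avg_lemma (A := (tail T)ᶜ) (B := hbox r) (tail_meas T).compl (hbox_meas _)
    (Φ := fun x => dens p β Z x * eF q g x) hΨm (c := ENNReal.ofReal (4 * r ^ 4))
    (D := ENNReal.ofReal (T ^ (-p)) * ENNReal.ofReal (Real.exp (β * (p * 2 ^ (p - 1)))) * G) (hρ.mul hFm) ?_ ?_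
  · have hvol : volume (hbox r) = ENNReal.ofReal (4 * r ^ 4) * ENNReal.ofReal 2 := by
      rw [hbox_vol (by positivity), ← ENNReal.ofReal_mul (by positivity)]
      congr 1; ring
    rw [hvol, mul_assoc, ENNReal.mul_le_mul_iff_right] at key
    · refine key.trans (le_of_eq ?_)
      rw [← ENNReal.ofReal_mul (by positivity), ← mul_assoc, ← ENNReal.ofReal_mul (by positivity)]
      congr 2; ring
    · simp; positivity
    · exact ENNReal.ofReal_ne_top
  · intro x hx
    have hxT := hmem x hx
    set Gd := {h : Heis | h ∈ hbox r ∧ g (Hmul x h) = 0} with hGd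
    have hmx : Measurable (fun h => Hmul x h) :=
      continuous_Hmul.measurable.comp (measurable_const.prodMk measurable_id)
    have hGdm : MeasurableSet Gd :=
      (hbox_meas _).inter (measurableSet_eq_fun (hgm.comp hmx) measurable_const)
    have hbad : volume {h : Heis | h ∈ hbox r ∧ g (Hmul x h) ≠ 0} ≤ ENNReal.ofReal (4 * r ^ 4) := by
      have hms : MeasurableSet {x | g x ≠ 0 ∧ ccNorm x ≤ 2 * T} :=
        (measurableSet_eq_fun hgm measurable_const).compl.inter (measurableSet_le hdm measurable_const)
      have e := (mp_left x).measure_preimage hms.nullMeasurableSet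
      refine le_trans ?_ (hvol.trans (ENNReal.ofReal_le_ofReal hv))
      rw [← e]
      refine measure_mono fun h hh => ⟨hh.2, ?_⟩
      have := ccNorm_mul hr hh.1 x
      linarith
    have hgood : ENNReal.ofReal (4 * r ^ 4) ≤ volume Gd := by
      have h1 : volume (hbox r) ≤ volume Gd + volume {h : Heis | h ∈ hbox r ∧ g (Hmul x h) ≠ 0} := by
        refine le_trans (measure_mono fun h hh => ?_) (measure_union_le _ _)
        by_cases c : g (Hmul x h) = 0
        · exact Or.inl ⟨hh, c⟩
        · exact Or.inr ⟨hh, c⟩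
      have h2 := h1.trans (add_le_add le_rfl hbad)
      rw [hbox_vol hr.le, show 8 * r ^ 4 = 4 * r ^ 4 + 4 * r ^ 4 by ring,
        ENNReal.ofReal_add (by positivity) (by positivity)] at h2
      exact (ENNReal.add_le_add_iff_right ENNReal.ofReal_ne_top).1 h2
    calc _ ≤ volume Gd * (dens p β Z x * eF q g x) := by gcongr
      _ = ∫⁻ h in Gd, dens p β Z x * eF q g x := by rw [setLIntegral_const, mul_comm]
      _ = ∫⁻ h in Gd, dens p β Z x * ‖g (Hmul x h) - g x‖ₑ ^ q := by
          refine setLIntegral_congr_fun hGdm fun h hh => ?_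
          simp only [eF]
          rw [hh.2, zero_sub, enorm_neg]
      _ ≤ ∫⁻ h in hbox r, dens p β Z x * ‖g (Hmul x h) - g x‖ₑ ^ q := lintegral_mono_set (fun h hh => hh.1)
  · intro h hh
    have k := key_est hq1.le hr hg hh hρ (tail_meas T).compl MeasurableSet.univ
      (K := ENNReal.ofReal (Real.exp (β * (p * 2 ^ (p - 1))))) (fun x hx k hk => ⟨trivial, ?_⟩)
    · rw [Measure.restrict_univ] at k
      refine k.trans ?_
      gcongr
      rw [ENNReal.ofReal_rpow_of_nonneg (by positivity) (by linarith)]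
      refine ENNReal.ofReal_le_ofReal ?_
      have : T ^ (-p) = (T ^ (1 - p)) ^ q := by
        rw [← Real.rpow_mul T0.le]; congr 1; linarith
      rw [this]
      refine Real.rpow_le_rpow (by positivity) ?_ (by linarith)
      rw [hrdef]; linarith
    · apply dens_le hβ hZ
      have h3 : 0 ≤ ccNorm x ^ p := Real.rpow_nonneg (ccNorm_nonneg x) _
      rcases (ccNorm_nonneg (Hmul x k)).eq_or_lt with h0 | hpos
      · rw [← h0, Real.zero_rpow (by linarith)]
        positivity
      · have h1 := ccNorm_mul (by positivity) hk x
        have h4 := rpow_tangent (p := p) (by linarith) hpos (ccNorm_nonneg x)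
        have h5 : ccNorm (Hmul x k) ^ (p - 1) ≤ 2 ^ (p - 1) * T ^ (p - 1) := by
          rw [← Real.mul_rpow (by norm_num) T0.le]
          exact Real.rpow_le_rpow hpos.le (by linarith [hmem x hx]) (by linarith)
        have h6 : p * ccNorm (Hmul x k) ^ (p - 1) * (ccNorm (Hmul x k) - ccNorm x) ≤ p * 2 ^ (p - 1) := by
          calc p * ccNorm (Hmul x k) ^ (p - 1) * (ccNorm (Hmul x k) - ccNorm x)
              ≤ p * ccNorm (Hmul x k) ^ (p - 1) * (50 * r) := by
                have : 0 ≤ ccNorm (Hmul x k) ^ (p - 1) := by positivity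
                gcongr; linarith
            _ ≤ p * (2 ^ (p - 1) * T ^ (p - 1)) * (50 * r) := by gcongr
            _ = 50 * p * (T ^ (p - 1) * r) * 2 ^ (p - 1) := by ring
            _ ≤ _ := by
                rw [htr]
                have : 0 ≤ p * (2:ℝ) ^ (p - 1) := by positivity
                linarith
        linarith

lemma FK {p q β Z : ℝ} (hp : 2 ≤ p) (hpq : (p - 1) * q = p) (hβ : 0 < β) (hZ : 0 < Z) :
    ∃ C : ℝ, 0 < C ∧ ∀ L : ℝ, 0 ≤ L → ∀ g : Heis → ℝ, ContDiff ℝ 1 g →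
    ∫⁻ x in {x | g x ≠ 0}, dens p β Z x ≤ ENNReal.ofReal (Real.exp (-L)) →
    ENNReal.ofReal L * ∫⁻ x, dens p β Z x * eF q g x ≤ ENNReal.ofReal C *
      ((∫⁻ x, dens p β Z x * eG q g x) + ∫⁻ x, dens p β Z x * eF q g x) := by
  obtain ⟨K, hK, hU⟩ := U_bound hp hpq hβ hZ
  obtain ⟨ε, hε, hεb⟩ : ∃ ε : ℝ, 0 < ε ∧ β * 2 ^ p * ε = 1 / 2 :=
    ⟨1 / (2 * β * 2 ^ p), by positivity, by field_simp⟩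
  obtain ⟨L0, hL00, hL0⟩ : ∃ L0 : ℝ, 0 ≤ L0 ∧ ∀ L, L0 ≤ L → 1 ≤ ε * L ∧
      Z * Real.exp (-(L / 2)) * (ε * L) ^ 4 ≤ 4 * (1 / 100) ^ 4 := by
    have h1 : Tendsto (fun L : ℝ => (Z * ε ^ 4 * 16) * ((L / 2) ^ 4 * Real.exp (-(L / 2)))) atTop
        (nhds ((Z * ε ^ 4 * 16) * 0)) := by
      refine Tendsto.const_mul _ ?_
      exact (Real.tendsto_pow_mul_exp_neg_atTop_nhds_zero 4).comp (tendsto_id.atTop_div_const (by norm_num))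
    rw [mul_zero] at h1
    have h2 := h1.eventually_le_const (u := 4 * (1 / 100) ^ 4) (by norm_num)
    obtain ⟨L0, h⟩ := eventually_atTop.1 ((h2.and (eventually_ge_atTop (1 / ε))).and (eventually_ge_atTop 0))
    refine ⟨L0, (h L0 le_rfl).2, fun L hL => ⟨?_, ?_⟩⟩
    · have := (h L hL).1.2
      rw [div_le_iff₀ hε] at this; linarith
    · refine le_trans (le_of_eq ?_) (h L hL).1.1
      ring
  set c1 := 2 * Real.exp (β * (p * 2 ^ (p - 1))) with hc1
  have hc1p : 0 < c1 := by positivity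
  refine ⟨L0 + (c1 + K) / ε, by positivity, fun L hL g hg hsupp => ?_⟩
  set G := ∫⁻ x, dens p β Z x * eG q g x with hG
  set F := ∫⁻ x, dens p β Z x * eF q g x with hF
  by_cases hLL : L ≤ L0
  · refine mul_le_mul' (ENNReal.ofReal_le_ofReal ?_) le_add_self
    have : 0 ≤ (c1 + K) / ε := by positivity
    linarith
  push Not at hLL
  obtain ⟨h1, h2⟩ := hL0 L hLL.le
  have hLpos : 0 < L := by linarith
  set T := (ε * L) ^ (1 / p) with hTd
  have hT1 : 1 ≤ T := Real.one_le_rpow h1 (by positivity)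
  have T0 : 0 < T := by linarith
  have hTp : T ^ p = ε * L := by
    rw [hTd, ← Real.rpow_mul (by positivity), one_div, inv_mul_cancel₀ (by linarith), Real.rpow_one]
  have hTnp : T ^ (-p) = 1 / (ε * L) := by rw [Real.rpow_neg T0.le, hTp, one_div]
  have hgm := hg.continuous.measurable
  have hdm := continuous_ccNorm.measurable
  have hvol : volume {x | g x ≠ 0 ∧ ccNorm x ≤ 2 * T} ≤ ENNReal.ofReal (Z * Real.exp (-(L / 2))) := by
    have hms : MeasurableSet {x | g x ≠ 0 ∧ ccNorm x ≤ 2 * T} :=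
      (measurableSet_eq_fun hgm measurable_const).compl.inter (measurableSet_le hdm measurable_const)
    have h3 : ENNReal.ofReal (Real.exp (-(L / 2)) / Z) * volume {x | g x ≠ 0 ∧ ccNorm x ≤ 2 * T} ≤
        ENNReal.ofReal (Real.exp (-L)) := by
      rw [← setLIntegral_const]
      refine le_trans ?_ ((lintegral_mono_set (s := {x | g x ≠ 0 ∧ ccNorm x ≤ 2 * T}) ?_).trans hsupp)
      · refine setLIntegral_mono' hms fun x hx => ENNReal.ofReal_le_ofReal ?_
        have h4 : ccNorm x ^ p ≤ 2 ^ p * (ε * L) := by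
          rw [← hTp, ← Real.mul_rpow (by norm_num) T0.le]
          exact Real.rpow_le_rpow (ccNorm_nonneg x) hx.2 (by linarith)
        have h5 : β * ccNorm x ^ p ≤ L / 2 := by
          calc β * ccNorm x ^ p ≤ β * (2 ^ p * (ε * L)) := by gcongr
            _ = (β * 2 ^ p * ε) * L := by ring
            _ = L / 2 := by rw [hεb]; ring
        gcongr
        linarith
      · exact fun x hx => hx.1
    have e : ENNReal.ofReal (Real.exp (-L)) = ENNReal.ofReal (Real.exp (-(L / 2)) / Z) *
        ENNReal.ofReal (Z * Real.exp (-(L / 2))) := by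
      rw [← ENNReal.ofReal_mul (by positivity)]
      congr 1
      rw [show -L = -(L / 2) + -(L / 2) by ring, Real.exp_add]
      field_simp
    rw [e] at h3
    rwa [ENNReal.mul_le_mul_iff_right] at h3
    · simp only [ne_eq, ENNReal.ofReal_eq_zero, not_le]; positivity
    · exact ENNReal.ofReal_ne_top
  have hin := FK_aux hp hpq hβ hZ hT1 (v := Z * Real.exp (-(L / 2))) (by
    have h6 : (T ^ (p - 1)) ^ 4 ≤ (ε * L) ^ 4 := by
      rw [← hTp]
      gcongr
      linarith
    have h7 : T ^ (1 - p) = 1 / T ^ (p - 1) := by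
      rw [one_div, ← Real.rpow_neg T0.le]; congr 1; ring
    have h8 : 0 < T ^ (p - 1) := by positivity
    rw [h7]
    have h9 : Z * Real.exp (-(L / 2)) * (T ^ (p - 1)) ^ 4 ≤ 4 * (1 / 100) ^ 4 := by
      refine le_trans ?_ h2
      gcongr
    rw [show 4 * (1 / T ^ (p - 1) / 100) ^ 4 = (4 * (1 / 100) ^ 4) / (T ^ (p - 1)) ^ 4 by field_simp,
      le_div_iff₀ (by positivity)]
    exact h9) hg hvol
  have hout := hU T T0 g hg
  have hFs : F ≤ ENNReal.ofReal ((c1 + K) * T ^ (-p)) * (G + F) := by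
    calc F = (∫⁻ x in (tail T)ᶜ, dens p β Z x * eF q g x) + ∫⁻ x in tail T, dens p β Z x * eF q g x :=
          split_lt_tail T _
      _ ≤ ENNReal.ofReal (c1 * T ^ (-p)) * (G + F) + ENNReal.ofReal (K * T ^ (-p)) * (G + F) := by
          refine add_le_add (hin.trans ?_) hout
          gcongr
          exact le_self_add
      _ = _ := by rw [← add_mul, ← ENNReal.ofReal_add (by positivity) (by positivity), add_mul]
  refine (mul_le_mul' le_rfl hFs).trans ?_
  rw [← mul_assoc, ← ENNReal.ofReal_mul hLpos.le, hTnp]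
  gcongr
  rw [show L * ((c1 + K) * (1 / (ε * L))) = (c1 + K) / ε by field_simp]
  linarith

end

open MeasureTheory Real Filter
noncomputable section

/-- Smooth cutoff profile: `0` for `|u| ≤ 1`, `1` for `u² ≥ 2`. -/
def phi (u : ℝ) : ℝ := Real.smoothTransition (u ^ 2 - 1)

lemma phi_contDiff : ContDiff ℝ 1 phi := by
  unfold phi
  exact Real.smoothTransition.contDiff.comp (by fun_prop)

lemma phi_nonneg (u : ℝ) : 0 ≤ phi u := Real.smoothTransition.nonneg _
lemma phi_le_one (u : ℝ) : phi u ≤ 1 := Real.smoothTransition.le_one _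
lemma phi_zero {u : ℝ} (h : |u| ≤ 1) : phi u = 0 := by
  refine Real.smoothTransition.zero_of_nonpos ?_
  have := (sq_le_one_iff_abs_le_one u).2 h
  linarith
lemma phi_one {u : ℝ} (h : 2 ≤ u ^ 2) : phi u = 1 :=
  Real.smoothTransition.one_of_one_le (by linarith)

lemma deriv_phi_zero1 {u : ℝ} (h : |u| < 1) : deriv phi u = 0 := by
  have : phi =ᶠ[nhds u] fun _ => 0 := by
    filter_upwards [(isOpen_lt continuous_abs continuous_const).mem_nhds h] with v hv
    exact phi_zero (le_of_lt hv)
  rw [this.deriv_eq]; simp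

lemma deriv_phi_zero2 {u : ℝ} (h : 2 ≤ |u|) : deriv phi u = 0 := by
  have h2 : 2 < u ^ 2 := by
    rw [← sq_abs]; nlinarith
  have : phi =ᶠ[nhds u] fun _ => 1 := by
    filter_upwards [(isOpen_lt continuous_const (continuous_pow 2)).mem_nhds h2] with v hv
    exact phi_one (le_of_lt hv)
  rw [this.deriv_eq]; simp

lemma deriv_phi_bdd : ∃ B : ℝ, 0 < B ∧ ∀ u, |deriv phi u| ≤ B := by
  have hc : Continuous (deriv phi) := phi_contDiff.continuous_deriv le_rfl
  obtain ⟨B, hB⟩ := (isCompact_Icc (a := (-2:ℝ)) (b := 2)).exists_bound_of_continuousOn hc.continuousOn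
  refine ⟨max B 1, by positivity, fun u => ?_⟩
  by_cases h : |u| ≤ 2
  · exact (hB u (abs_le.1 h)).trans (le_max_left _ _)
  · rw [deriv_phi_zero2 (not_le.1 h).le, abs_zero]; positivity

/-- The slices of `g`. -/
def slice (s : ℝ) (g : Heis → ℝ) (x : Heis) : ℝ := s * phi (g x / s)

lemma slice_contDiff (s : ℝ) {g : Heis → ℝ} (hg : ContDiff ℝ 1 g) : ContDiff ℝ 1 (slice s g) :=
  contDiff_const.mul (phi_contDiff.comp (hg.div_const s))

lemma slice_grad {s : ℝ} (hs : 0 < s) {g : Heis → ℝ} (hg : ContDiff ℝ 1 g) (x : Heis) :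
    gradLen (slice s g) x = |deriv phi (g x / s)| * gradLen g x := by
  have h1 : HasFDerivAt (fun x => g x / s) (s⁻¹ • fderiv ℝ g x) x := by
    have := (hg.differentiable one_ne_zero x).hasFDerivAt.const_mul s⁻¹
    refine this.congr_of_eventuallyEq (Eventually.of_forall fun y => ?_)
    simp only; rw [div_eq_inv_mul]
  have h2 := ((phi_contDiff.differentiable one_ne_zero (g x / s)).hasDerivAt.comp_hasFDerivAt x h1).const_mul s
  have h3 : fderiv ℝ (slice s g) x = deriv phi (g x / s) • fderiv ℝ g x := by
    have h4 : HasFDerivAt (slice s g) _ x := h2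
    rw [h4.fderiv, smul_smul, smul_smul]
    congr 1
    field_simp
  have e : (X1 (slice s g) x) ^ 2 + (X2 (slice s g) x) ^ 2 =
      (deriv phi (g x / s)) ^ 2 * ((X1 g x) ^ 2 + (X2 g x) ^ 2) := by
    simp only [X1, X2, h3, ContinuousLinearMap.smul_apply, smul_eq_mul]
    ring
  rw [gradLen, e, Real.sqrt_mul (sq_nonneg _), Real.sqrt_sq_eq_abs]; rfl

lemma enorm_rpow_eq {q : ℝ} (hq : 0 ≤ q) (a : ℝ) : ‖a‖ₑ ^ q = ENNReal.ofReal (|a| ^ q) := by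
  rw [Real.enorm_eq_ofReal_abs, ENNReal.ofReal_rpow_of_nonneg (abs_nonneg _) hq]

lemma slice_eF {q s : ℝ} (hq' : 0 < q) (hs : 0 < s) (g : Heis → ℝ) (x : Heis) :
    eF q (slice s g) x ≤ if s ≤ |g x| then ENNReal.ofReal (s ^ q) else 0 := by
  have hq := hq'.le
  rw [eF, enorm_rpow_eq hq]
  split_ifs with h
  · refine ENNReal.ofReal_le_ofReal (Real.rpow_le_rpow (abs_nonneg _) ?_ hq)
    rw [slice, abs_mul, abs_of_pos hs, abs_of_nonneg (phi_nonneg _)]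
    exact mul_le_of_le_one_right hs.le (phi_le_one _)
  · have h0 : slice s g x = 0 := by
      rw [slice, phi_zero, mul_zero]
      rw [abs_div, abs_of_pos hs, div_le_one hs]
      exact (not_le.1 h).le
    rw [h0, abs_zero, Real.zero_rpow hq'.ne', ENNReal.ofReal_zero]

lemma slice_eG {q s B : ℝ} (hq : 0 < q) (hs : 0 < s) (hB0 : 0 < B) (hB : ∀ u, |deriv phi u| ≤ B)
    {g : Heis → ℝ} (hg : ContDiff ℝ 1 g) (x : Heis) :
    eG q (slice s g) x ≤ if s ≤ |g x| ∧ |g x| < 2 * s then ENNReal.ofReal (B ^ q) * eG q g x else 0 := by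
  rw [eG, slice_grad hs hg, enorm_mul, ENNReal.mul_rpow_of_nonneg _ _ hq.le]
  split_ifs with h
  · rw [eG]
    gcongr
    rw [enorm_rpow_eq hq.le, abs_abs]
    exact ENNReal.ofReal_le_ofReal (Real.rpow_le_rpow (abs_nonneg _) (hB _) hq.le)
  · have : deriv phi (g x / s) = 0 := by
      by_cases c : s ≤ |g x|
      · apply deriv_phi_zero2
        rw [abs_div, abs_of_pos hs, le_div_iff₀ hs]
        by_contra c2
        exact h ⟨c, by linarith⟩
      · apply deriv_phi_zero1
        rw [abs_div, abs_of_pos hs, div_lt_one hs]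
        exact not_le.1 c
    rw [this]; simp [hq]

lemma geom_bd {q τ : ℝ} (hq : 1 ≤ q) (hτ : 0 < τ) (n : ℕ) :
    ∑ k ∈ Finset.range (n + 1), (τ * 2 ^ k) ^ q ≤ 2 * (τ * 2 ^ n) ^ q := by
  induction n with
  | zero =>
    have : 0 ≤ τ ^ q := by positivity
    simp; linarith
  | succ n ih =>
    rw [Finset.sum_range_succ]
    have h1 : (τ * 2 ^ (n + 1)) ^ q = 2 ^ q * (τ * 2 ^ n) ^ q := by
      rw [← Real.mul_rpow (by norm_num) (by positivity)]; congr 1; ring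
    have h2 : (2:ℝ) ≤ 2 ^ q := by
      simpa using Real.rpow_le_rpow_of_exponent_le (show (1:ℝ) ≤ 2 by norm_num) hq
    have h3 : 0 ≤ (τ * 2 ^ n) ^ q := by positivity
    nlinarith

lemma near {τ w : ℝ} (hτ : 0 < τ) (hw : τ ≤ w) : ∃ K : ℕ, τ * 2 ^ K ≤ w ∧ w < τ * 2 ^ (K + 1) := by
  obtain ⟨n, h1, h2⟩ := exists_nat_pow_near (x := w / τ) (y := 2)
      (by rwa [le_div_iff₀ hτ, one_mul]) (by norm_num)
  rw [le_div_iff₀ hτ] at h1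
  rw [div_lt_iff₀ hτ] at h2
  exact ⟨n, by linarith, by linarith⟩

lemma le_of_near {τ w : ℝ} (hτ : 0 < τ) {K k : ℕ} (h1 : w < τ * 2 ^ (K + 1)) (h2 : τ * 2 ^ k ≤ w) : k ≤ K := by
  by_contra h
  push Not at h
  have : (2:ℝ) ^ (K + 1) ≤ 2 ^ k := pow_le_pow_right₀ (by norm_num) h
  nlinarith

lemma not_le_of_small {τ w : ℝ} (hτ : 0 < τ) (hw : w < τ) (k : ℕ) : ¬ τ * 2 ^ k ≤ w := by
  intro h
  have : (1:ℝ) ≤ 2 ^ k := one_le_pow₀ (by norm_num)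
  nlinarith

lemma sum_eF {q τ w : ℝ} (hq : 1 ≤ q) (hτ : 0 < τ) :
    ∑' k : ℕ, (if τ * 2 ^ k ≤ w then ENNReal.ofReal ((τ * 2 ^ k) ^ q) else 0) ≤ 2 * ENNReal.ofReal (w ^ q) := by
  by_cases hw : τ ≤ w
  · obtain ⟨K, h1, h2⟩ := near hτ hw
    rw [tsum_eq_sum (s := Finset.range (K + 1))]
    · calc ∑ k ∈ Finset.range (K + 1), (if τ * 2 ^ k ≤ w then ENNReal.ofReal ((τ * 2 ^ k) ^ q) else 0)
          ≤ ∑ k ∈ Finset.range (K + 1), ENNReal.ofReal ((τ * 2 ^ k) ^ q) := by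
            refine Finset.sum_le_sum fun k _ => ?_
            split_ifs
            · exact le_rfl
            · exact zero_le
        _ = ENNReal.ofReal (∑ k ∈ Finset.range (K + 1), (τ * 2 ^ k) ^ q) := by
            rw [ENNReal.ofReal_sum_of_nonneg]; intros; positivity
        _ ≤ ENNReal.ofReal (2 * w ^ q) := by
            refine ENNReal.ofReal_le_ofReal ((geom_bd hq hτ K).trans ?_)
            have := Real.rpow_le_rpow (by positivity) h1 (by linarith : 0 ≤ q)
            linarith
        _ = _ := by rw [ENNReal.ofReal_mul (by norm_num)]; simp
    · intro k hk
      rw [if_neg]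
      intro h
      exact hk (Finset.mem_range.2 (Nat.lt_succ_of_le (le_of_near hτ h2 h)))
  · have : ∀ k : ℕ, (if τ * 2 ^ k ≤ w then ENNReal.ofReal ((τ * 2 ^ k) ^ q) else 0) = 0 :=
      fun k => if_neg (not_le_of_small hτ (not_le.1 hw) k)
    simp [this]

lemma sum_eG {τ w : ℝ} (hτ : 0 < τ) (c : ENNReal) :
    ∑' k : ℕ, (if τ * 2 ^ k ≤ w ∧ w < 2 * (τ * 2 ^ k) then c else 0) ≤ c := by
  by_cases hw : τ ≤ w
  · obtain ⟨K, h1, h2⟩ := near hτ hw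
    rw [tsum_eq_single K]
    · split_ifs
      · exact le_rfl
      · exact zero_le
    · intro k hk
      rw [if_neg]
      rintro ⟨h3, h4⟩
      refine hk (le_antisymm (le_of_near hτ h2 h3) (le_of_near hτ ?_ h1))
      rw [pow_succ]; linarith
  · have : ∀ k : ℕ, (if τ * 2 ^ k ≤ w ∧ w < 2 * (τ * 2 ^ k) then c else 0) = 0 :=
      fun k => if_neg (fun h => not_le_of_small hτ (not_le.1 hw) k h.1)
    simp [this]

/-- pointwise lower bound for the slices -/
lemma slice_lower {q τ : ℝ} (hq : 1 ≤ q) (hq2 : q ≤ 2) (hτ : 0 < τ) (g : Heis → ℝ) (x : Heis) :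
    eF q g x * ENNReal.ofReal (Real.log (|g x| / τ)) ≤
      16 * (∑' k : ℕ, ENNReal.ofReal (q * k * Real.log 2) * eF q (slice (τ * 2 ^ k) g) x) + 2 * eF q g x := by
  set w := |g x| with hw
  have hq0 : 0 ≤ q := by linarith
  have hl2 : 0 < Real.log 2 := Real.log_pos (by norm_num)
  have hl21 : Real.log 2 ≤ 1 := by linarith [Real.log_two_lt_d9]
  have eFw : eF q g x = ENNReal.ofReal (w ^ q) := enorm_rpow_eq hq0 _
  have small : ∀ (h : w < 4 * τ), eF q g x * ENNReal.ofReal (Real.log (w / τ)) ≤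
      16 * (∑' k : ℕ, ENNReal.ofReal (q * k * Real.log 2) * eF q (slice (τ * 2 ^ k) g) x) + 2 * eF q g x := by
    intro h
    refine le_trans ?_ le_add_self
    rw [mul_comm]
    gcongr
    rw [show (2:ENNReal) = ENNReal.ofReal 2 by simp]
    refine ENNReal.ofReal_le_ofReal ?_
    rcases (abs_nonneg (g x)).eq_or_lt with h0 | hpos
    · rw [hw, ← h0]; simp
    · have : Real.log (w / τ) ≤ Real.log (2 ^ 2) :=
        Real.log_le_log (by positivity) (by rw [div_le_iff₀ hτ]; linarith)
      rw [Real.log_pow] at this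
      push_cast at this
      linarith
  by_cases hw4 : w < 4 * τ
  · exact small hw4
  push Not at hw4
  obtain ⟨K, h1, h2⟩ := near hτ (by linarith : τ ≤ w)
  have hK : 2 ≤ K + 1 := by
    by_contra hc
    have : K = 0 := by omega
    subst this
    simp at h2; linarith
  obtain ⟨k, rfl⟩ : ∃ k, K = k + 1 := ⟨K - 1, by omega⟩
  have hs : 0 < τ * 2 ^ k := by positivity
  have hws : 2 * (τ * 2 ^ k) ≤ w := by rw [pow_succ] at h1; linarith
  have hws4 : w ≤ 4 * (τ * 2 ^ k) := by rw [pow_succ, pow_succ] at h2; linarith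
  have hsl : eF q (slice (τ * 2 ^ k) g) x = ENNReal.ofReal ((τ * 2 ^ k) ^ q) := by
    rw [eF, enorm_rpow_eq hq0, slice, phi_one, mul_one, abs_of_pos hs]
    rw [← sq_abs, abs_div, abs_of_pos hs, ← hw, div_pow, le_div_iff₀ (by positivity)]
    nlinarith
  have hterm := ENNReal.le_tsum (f := fun k : ℕ => ENNReal.ofReal (q * k * Real.log 2) * eF q (slice (τ * 2 ^ k) g) x) k
  simp only [hsl] at hterm
  refine le_trans ?_ (add_le_add (mul_le_mul' le_rfl hterm) le_rfl)
  rw [eFw, show (16:ENNReal) = ENNReal.ofReal 16 by simp, show (2:ENNReal) = ENNReal.ofReal 2 by simp,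
    ← ENNReal.ofReal_mul (by positivity), ← ENNReal.ofReal_mul (by positivity), ← ENNReal.ofReal_mul (by norm_num),
    ← ENNReal.ofReal_mul (by norm_num), ← ENNReal.ofReal_add (by positivity) (by positivity)]
  refine ENNReal.ofReal_le_ofReal ?_
  have hlog : Real.log (w / τ) ≤ k * Real.log 2 + 2 := by
    have : Real.log (w / τ) ≤ Real.log (2 ^ (k + 2)) :=
      Real.log_le_log (by apply div_pos <;> linarith) (by rw [div_le_iff₀ hτ, pow_add]; linarith)
    rw [Real.log_pow] at this
    push_cast at this
    linarith
  have hwq : w ^ q ≤ 16 * (τ * 2 ^ k) ^ q := by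
    calc w ^ q ≤ (4 * (τ * 2 ^ k)) ^ q := Real.rpow_le_rpow (by linarith) hws4 hq0
      _ = 4 ^ q * (τ * 2 ^ k) ^ q := Real.mul_rpow (by norm_num) hs.le
      _ ≤ 4 ^ (2:ℝ) * (τ * 2 ^ k) ^ q := by
          gcongr
          norm_num
      _ = _ := by norm_num
  have hwq0 : 0 ≤ w ^ q := by positivity
  calc w ^ q * Real.log (w / τ) ≤ w ^ q * (k * Real.log 2 + 2) := by gcongr
    _ = (k * Real.log 2) * w ^ q + 2 * w ^ q := by ring
    _ ≤ (k * Real.log 2) * (16 * (τ * 2 ^ k) ^ q) + 2 * w ^ q := by gcongr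
    _ ≤ q * ((k * Real.log 2) * (16 * (τ * 2 ^ k) ^ q)) + 2 * w ^ q := by
        have : 0 ≤ (k * Real.log 2) * (16 * (τ * 2 ^ k) ^ q) := by positivity
        nlinarith
    _ = _ := by ring

lemma slices {p q β Z : ℝ} (hp : 2 ≤ p) (hpq : (p - 1) * q = p) (hβ : 0 < β) (hZ : 0 < Z) :
    ∃ C : ℝ, 0 < C ∧ ∀ g : Heis → ℝ, ContDiff ℝ 1 g → ∀ τ : ℝ, 0 < τ →
    ∫⁻ x, dens p β Z x * eF q g x ≤ ENNReal.ofReal (τ ^ q) →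
    ∫⁻ x, dens p β Z x * (eF q g x * ENNReal.ofReal (Real.log (|g x| / τ))) ≤ ENNReal.ofReal C *
      ((∫⁻ x, dens p β Z x * eG q g x) + ∫⁻ x, dens p β Z x * eF q g x) := by
  obtain ⟨hq1, hq2⟩ := q_facts hp hpq
  have hq0 : 0 < q := by linarith
  obtain ⟨C, hC, hFK⟩ := FK hp hpq hβ hZ
  obtain ⟨B, hB0, hB⟩ := deriv_phi_bdd
  refine ⟨16 * (C * (B ^ q + 2)) + 2, by positivity, fun g hg τ hτ hN => ?_⟩
  have hρ := measurable_dens hp β Z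
  have hFm := measurable_eF q hg
  have hGm := measurable_eG q hg
  have hgm := hg.continuous.measurable
  set G := ∫⁻ x, dens p β Z x * eG q g x with hG
  set F := ∫⁻ x, dens p β Z x * eF q g x with hF
  have hs : ∀ k : ℕ, 0 < τ * 2 ^ k := fun k => by positivity
  have hsF : ∀ k : ℕ, Measurable (eF q (slice (τ * 2 ^ k) g)) := fun k => measurable_eF q (slice_contDiff _ hg)
  have hsG : ∀ k : ℕ, Measurable (eG q (slice (τ * 2 ^ k) g)) := fun k => measurable_eG q (slice_contDiff _ hg)
  have hk : ∀ k : ℕ, ENNReal.ofReal (q * k * Real.log 2) * ∫⁻ x, dens p β Z x * eF q (slice (τ * 2 ^ k) g) x ≤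
      ENNReal.ofReal C * ((∫⁻ x, dens p β Z x * eG q (slice (τ * 2 ^ k) g) x) +
        ∫⁻ x, dens p β Z x * eF q (slice (τ * 2 ^ k) g) x) := by
    intro k
    refine hFK _ (by have := Real.log_pos (show (1:ℝ) < 2 by norm_num); positivity) _ (slice_contDiff _ hg) ?_
    have h1 : ENNReal.ofReal ((τ * 2 ^ k) ^ q) * ∫⁻ x in {x | slice (τ * 2 ^ k) g x ≠ 0}, dens p β Z x ≤
        ENNReal.ofReal (τ ^ q) := by
      refine le_trans ?_ hN
      rw [← lintegral_const_mul _ hρ]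
      refine (setLIntegral_mono' ?_ fun x hx => ?_).trans (setLIntegral_le_lintegral {x | slice (τ * 2 ^ k) g x ≠ 0} _)
      · exact (measurableSet_eq_fun (slice_contDiff _ hg).continuous.measurable measurable_const).compl
      · rw [mul_comm]
        gcongr
        rw [eF, enorm_rpow_eq hq0.le]
        refine ENNReal.ofReal_le_ofReal (Real.rpow_le_rpow (hs k).le ?_ hq0.le)
        by_contra hc
        apply hx
        rw [slice, phi_zero, mul_zero]
        rw [abs_div, abs_of_pos (hs k), div_le_one (hs k)]
        exact (not_le.1 hc).le
    have e : ENNReal.ofReal (τ ^ q) = ENNReal.ofReal ((τ * 2 ^ k) ^ q) *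
        ENNReal.ofReal (Real.exp (-(q * k * Real.log 2))) := by
      rw [← ENNReal.ofReal_mul (by positivity)]
      congr 1
      rw [Real.mul_rpow hτ.le (by positivity), mul_assoc]
      have : ((2:ℝ) ^ k) ^ q = Real.exp (q * k * Real.log 2) := by
        rw [← Real.rpow_natCast, ← Real.rpow_mul (by norm_num), Real.rpow_def_of_pos (by norm_num)]
        congr 1; ring
      rw [this, ← Real.exp_add]; simp
    rw [e] at h1
    rwa [ENNReal.mul_le_mul_iff_right] at h1
    · simp only [ne_eq, ENNReal.ofReal_eq_zero, not_le]; exact Real.rpow_pos_of_pos (hs k) _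
    · exact ENNReal.ofReal_ne_top
  have hρF : Measurable (fun x => dens p β Z x * eF q g x) := hρ.mul hFm
  have hρG : Measurable (fun x => dens p β Z x * eG q g x) := hρ.mul hGm
  have hρsF : ∀ k : ℕ, Measurable (fun x => dens p β Z x * eF q (slice (τ * 2 ^ k) g) x) := fun k => hρ.mul (hsF k)
  have hρsG : ∀ k : ℕ, Measurable (fun x => dens p β Z x * eG q (slice (τ * 2 ^ k) g) x) := fun k => hρ.mul (hsG k)
  have hρsF2 : ∀ k : ℕ, Measurable (fun x => ENNReal.ofReal (q * k * Real.log 2) *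
      (dens p β Z x * eF q (slice (τ * 2 ^ k) g) x)) := fun k => (hρsF k).const_mul _
  have hsumF : ∑' k : ℕ, ∫⁻ x, dens p β Z x * eF q (slice (τ * 2 ^ k) g) x ≤ 2 * F := by
    rw [← lintegral_tsum (fun k => (hρsF k).aemeasurable), hF, ← lintegral_const_mul _ hρF]
    refine lintegral_mono fun x => ?_
    rw [ENNReal.tsum_mul_left, mul_left_comm]
    refine mul_le_mul' le_rfl ((ENNReal.tsum_le_tsum fun k => slice_eF hq0 (hs k) g x).trans
      ((sum_eF hq1.le hτ).trans (le_of_eq ?_)))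
    rw [eF, enorm_rpow_eq hq0.le]
  have hsumG : ∑' k : ℕ, ∫⁻ x, dens p β Z x * eG q (slice (τ * 2 ^ k) g) x ≤ ENNReal.ofReal (B ^ q) * G := by
    rw [← lintegral_tsum (fun k => (hρsG k).aemeasurable), hG, ← lintegral_const_mul _ hρG]
    refine lintegral_mono fun x => ?_
    rw [ENNReal.tsum_mul_left, mul_left_comm]
    exact mul_le_mul' le_rfl ((ENNReal.tsum_le_tsum fun k => slice_eG hq0 (hs k) hB0 hB hg x).trans
      (sum_eG hτ _))
  have hmain : ∫⁻ x, dens p β Z x * ∑' k : ℕ, ENNReal.ofReal (q * k * Real.log 2) * eF q (slice (τ * 2 ^ k) g) x ≤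
      ENNReal.ofReal C * (ENNReal.ofReal (B ^ q) * G + 2 * F) := by
    calc _ = ∑' k : ℕ, ENNReal.ofReal (q * k * Real.log 2) *
            ∫⁻ x, dens p β Z x * eF q (slice (τ * 2 ^ k) g) x := by
          simp_rw [← ENNReal.tsum_mul_left, mul_left_comm (dens p β Z _)]
          rw [lintegral_tsum (fun k => (hρsF2 k).aemeasurable)]
          exact tsum_congr fun k => lintegral_const_mul _ (hρsF k)
      _ ≤ ∑' k : ℕ, ENNReal.ofReal C * ((∫⁻ x, dens p β Z x * eG q (slice (τ * 2 ^ k) g) x) +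
            ∫⁻ x, dens p β Z x * eF q (slice (τ * 2 ^ k) g) x) := ENNReal.tsum_le_tsum hk
      _ ≤ _ := by
          rw [ENNReal.tsum_mul_left, ENNReal.tsum_add]
          gcongr
  have hmS : Measurable (fun x => ∑' k : ℕ, ENNReal.ofReal (q * k * Real.log 2) * eF q (slice (τ * 2 ^ k) g) x) :=
    Measurable.ennreal_tsum fun k => (hsF k).const_mul _
  calc ∫⁻ x, dens p β Z x * (eF q g x * ENNReal.ofReal (Real.log (|g x| / τ)))
      ≤ ∫⁻ x, (16 * (dens p β Z x * ∑' k : ℕ, ENNReal.ofReal (q * k * Real.log 2) * eF q (slice (τ * 2 ^ k) g) x) +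
          2 * (dens p β Z x * eF q g x)) := by
        refine lintegral_mono fun x => ?_
        refine (mul_le_mul' le_rfl (slice_lower hq1.le hq2 hτ g x)).trans (le_of_eq ?_)
        ring
    _ ≤ 16 * (ENNReal.ofReal C * (ENNReal.ofReal (B ^ q) * G + 2 * F)) + 2 * F := by
        have hρS : Measurable (fun x => dens p β Z x *
          ∑' k : ℕ, ENNReal.ofReal (q * k * Real.log 2) * eF q (slice (τ * 2 ^ k) g) x) := hρ.mul hmS
        have hρF2 : Measurable (fun x => 2 * (dens p β Z x * eF q g x)) := hρF.const_mul _
        rw [lintegral_add_right _ hρF2, lintegral_const_mul _ hρS, lintegral_const_mul _ hρF]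
        gcongr
    _ ≤ 16 * (ENNReal.ofReal C * (ENNReal.ofReal (B ^ q + 2) * (G + F))) + 2 * (G + F) := by
        refine add_le_add (mul_le_mul' le_rfl (mul_le_mul' le_rfl ?_)) (mul_le_mul' le_rfl le_add_self)
        rw [mul_add]
        refine add_le_add ?_ ?_
        · gcongr; linarith
        · gcongr
          rw [show (2:ENNReal) = ENNReal.ofReal 2 by simp]
          refine ENNReal.ofReal_le_ofReal ?_
          have : 0 ≤ B ^ q := by positivity
          linarith
    _ = _ := by
        rw [ENNReal.ofReal_add (p := 16 * (C * (B ^ q + 2))) (q := 2) (by positivity) (by positivity),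
          ENNReal.ofReal_mul (p := 16) (by positivity), ENNReal.ofReal_mul (p := C) hC.le]
        simp only [ENNReal.ofReal_ofNat]
        ring

end

open MeasureTheory Real Filter
noncomputable section

lemma H_le_sq {s : ℝ} (hs : 0 ≤ s) : s * Real.log s - s + 1 ≤ (s - 1) ^ 2 := by
  rcases hs.eq_or_lt with h | h
  · rw [← h]; simp
  · have := Real.log_le_sub_one_of_pos h
    nlinarith

lemma rpow_le_four {q v : ℝ} (hq0 : 0 < q) (hq2 : q ≤ 2) (h0 : 0 ≤ v) (hv : v ≤ 2) : v ^ q ≤ 4 := by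
  calc v ^ q ≤ 2 ^ q := Real.rpow_le_rpow h0 hv hq0.le
    _ ≤ 2 ^ (2:ℝ) := Real.rpow_le_rpow_of_exponent_le (by norm_num) hq2
    _ = 4 := by norm_num

lemma H3 {q v : ℝ} (hq0 : 0 < q) (hq2 : q ≤ 2) (h0 : 0 ≤ v) (hv : v ≤ 2) :
    v ^ q * Real.log (v ^ q) - v ^ q + 1 ≤ 9 := by
  have h1 := rpow_le_four hq0 hq2 h0 hv
  have h2 : 0 ≤ v ^ q := by positivity
  refine (H_le_sq h2).trans ?_
  nlinarith

lemma H4 {q v w : ℝ} (hq0 : 0 < q) (hq2 : q ≤ 2) (h0 : 0 ≤ v) (hv : |v - 1| ≤ w) (hw : w ≤ 1) :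
    v ^ q * Real.log (v ^ q) - v ^ q + 1 ≤ 9 * w ^ q := by
  have hw0 : 0 ≤ w := (abs_nonneg _).trans hv
  have h2 : 0 ≤ v ^ q := by positivity
  have hv' := abs_le.1 hv
  have hwq : w ^ 2 ≤ w ^ q := by
    rcases hw0.eq_or_lt with h | h
    · rw [← h, Real.zero_rpow hq0.ne']; simp
    · rw [← Real.rpow_natCast]
      exact Real.rpow_le_rpow_of_exponent_ge h hw (by simpa using hq2)
  refine (H_le_sq h2).trans ?_
  have key : |v ^ q - 1| ≤ 3 * w := by
    rcases le_total 1 v with h | h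
    · have a1 : 1 ≤ v ^ q := Real.one_le_rpow h hq0.le
      have a2 : v ^ q ≤ v ^ 2 := by
        rw [← Real.rpow_natCast]
        exact Real.rpow_le_rpow_of_exponent_le h (by simpa using hq2)
      rw [abs_of_nonneg (by linarith)]
      nlinarith
    · have a1 : v ^ q ≤ 1 := Real.rpow_le_one h0 h hq0.le
      have a2 : v ^ 2 ≤ v ^ q := by
        rcases h0.eq_or_lt with h' | h'
        · rw [← h', Real.zero_rpow hq0.ne']; simp
        · rw [← Real.rpow_natCast]
          exact Real.rpow_le_rpow_of_exponent_ge h' h (by simpa using hq2)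
      rw [abs_of_nonpos (by linarith)]
      nlinarith
  calc (v ^ q - 1) ^ 2 = |v ^ q - 1| ^ 2 := (sq_abs _).symm
    _ ≤ (3 * w) ^ 2 := by gcongr
    _ ≤ 9 * w ^ q := by nlinarith

lemma H2 {q v w : ℝ} (hq0 : 0 < q) (hq2 : q ≤ 2) (h0 : 0 ≤ v) (hv : v ≤ 2 * w) (hw : 1 ≤ w) :
    v ^ q * Real.log (v ^ q) - v ^ q + 1 ≤ 9 * w ^ q + 8 * (w ^ q * Real.log w) := by
  have h2 : 0 ≤ v ^ q := by positivity
  have hwq : 1 ≤ w ^ q := Real.one_le_rpow hw hq0.le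
  have hlw : 0 ≤ Real.log w := Real.log_nonneg hw
  rcases le_total v 1 with h | h
  · have a1 : v ^ q ≤ 1 := Real.rpow_le_one h0 h hq0.le
    have a2 : v ^ q * Real.log (v ^ q) ≤ 0 := mul_nonpos_of_nonneg_of_nonpos h2 (Real.log_nonpos h2 a1)
    have a3 : 0 ≤ w ^ q * Real.log w := by positivity
    linarith
  · have a1 : 1 ≤ v ^ q := Real.one_le_rpow h hq0.le
    have a2 : v ^ q ≤ 4 * w ^ q := by
      calc v ^ q ≤ (2 * w) ^ q := Real.rpow_le_rpow h0 hv hq0.le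
        _ = 2 ^ q * w ^ q := Real.mul_rpow (by norm_num) (by linarith)
        _ ≤ 4 * w ^ q := by
          have := rpow_le_four hq0 hq2 (by norm_num : (0:ℝ) ≤ 2) le_rfl
          gcongr
    have a3 : Real.log (v ^ q) ≤ 2 + 2 * Real.log w := by
      calc Real.log (v ^ q) ≤ Real.log (4 * w ^ q) := Real.log_le_log (by linarith) a2
        _ = Real.log 4 + q * Real.log w := by
          rw [Real.log_mul (by norm_num) (by linarith), Real.log_rpow (by linarith)]
        _ ≤ _ := by
          have h4 : Real.log 4 = 2 * Real.log 2 := by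
            rw [show (4:ℝ) = 2 ^ 2 by norm_num, Real.log_pow]; norm_num
          have := Real.log_two_lt_d9
          nlinarith
    have a4 : v ^ q * Real.log (v ^ q) ≤ (4 * w ^ q) * (2 + 2 * Real.log w) :=
      mul_le_mul a2 a3 (Real.log_nonneg a1) (by linarith)
    nlinarith

/-- pointwise bound -/
lemma ptwise {q τ a g : ℝ} (hq0 : 0 < q) (hq2 : q ≤ 2) (hτ : 0 < τ) (ha : |a| ≤ τ) :
    |a + g| ^ q * Real.log (|a + g| ^ q / τ ^ q) - |a + g| ^ q + τ ^ q ≤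
      9 * |g| ^ q + 8 * (|g| ^ q * max (Real.log (|g| / τ)) 0) + 9 * (if |a| = τ then 0 else τ ^ q) := by
  have ht : 0 < τ ^ q := Real.rpow_pos_of_pos hτ q
  set v := |a + g| / τ with hv
  set w := |g| / τ with hw
  have hv0 : 0 ≤ v := by positivity
  have hw0 : 0 ≤ w := by positivity
  have e1 : |a + g| ^ q = τ ^ q * v ^ q := by
    rw [← Real.mul_rpow hτ.le hv0]; congr 1; rw [hv]; field_simp
  have e2 : |g| ^ q = τ ^ q * w ^ q := by
    rw [← Real.mul_rpow hτ.le hw0]; congr 1; rw [hw]; field_simp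
  have hvw : v ≤ 1 + w := by
    rw [hv, hw, div_le_iff₀ hτ, add_mul, div_mul_cancel₀ _ hτ.ne']
    linarith [abs_add_le a g]
  have hwq : 0 ≤ w ^ q := by positivity
  have hm : 0 ≤ max (Real.log w) 0 := le_max_right _ _
  have main : v ^ q * Real.log (v ^ q) - v ^ q + 1 ≤
      9 * w ^ q + 8 * (w ^ q * max (Real.log w) 0) + 9 * (if |a| = τ then 0 else 1) := by
    have hi : (0:ℝ) ≤ if |a| = τ then 0 else 1 := by split_ifs <;> norm_num
    have hp' : 0 ≤ w ^ q * max (Real.log w) 0 := by positivity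
    rcases le_total 1 w with h | h
    · have := H2 hq0 hq2 hv0 (by linarith : v ≤ 2 * w) h
      have h3 : w ^ q * Real.log w ≤ w ^ q * max (Real.log w) 0 := by gcongr; exact le_max_left _ _
      linarith
    · split_ifs with hc
      · have : |v - 1| ≤ w := by
          have h5 : v - 1 = (|a + g| - |a|) / τ := by rw [hv, hc]; field_simp
          rw [h5, abs_div, abs_of_pos hτ, hw]
          refine div_le_div_of_nonneg_right ?_ hτ.le
          have := abs_abs_sub_abs_le (a + g) a
          simpa using this
        have := H4 hq0 hq2 hv0 this h
        linarith
      · have := H3 hq0 hq2 hv0 (by linarith)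
        linarith
  have e3 : |a + g| ^ q / τ ^ q = v ^ q := by rw [e1]; field_simp
  rw [e3, e1, e2]
  have := mul_le_mul_of_nonneg_left main ht.le
  have e4 : (if |a| = τ then 0 else τ ^ q) = τ ^ q * (if |a| = τ then 0 else 1) := by split_ifs <;> simp
  rw [e4]
  linarith

lemma ent_split {F I t : ℝ} (hF : 0 ≤ F) (hI : 0 < I) (ht : 0 < t) :
    F * Real.log (F / I) - (F * (t / I) - t) ≤ F * Real.log (F / t) - F + t := by
  rcases hF.eq_or_lt with h | h
  · rw [← h]; simp
  · have e : Real.log (F / I) = Real.log (F / t) + Real.log (t / I) := by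
      rw [← Real.log_mul (by positivity) (by positivity)]; congr 1; field_simp
    have h1 := Real.log_le_sub_one_of_pos (show 0 < t / I by positivity)
    rw [e]
    nlinarith

lemma integral_le_lint {μ : Measure Heis} {h : Heis → ℝ} (hi : Integrable h μ) :
    ∫ x, h x ∂μ ≤ (∫⁻ x, ENNReal.ofReal (h x) ∂μ).toReal := by
  rw [integral_eq_lintegral_pos_part_sub_lintegral_neg_part hi]
  have : 0 ≤ (∫⁻ x, ENNReal.ofReal (-h x) ∂μ).toReal := ENNReal.toReal_nonneg
  linarith

lemma finish {q C1 C2 : ℝ} (hq0 : 0 < q) (hq2 : q ≤ 2) (hC1 : 0 < C1) (hC2 : 0 < C2)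
    (μ : Measure Heis) [IsProbabilityMeasure μ]
    (hP : ∀ f : Heis → ℝ, ContDiff ℝ 1 f → ∫⁻ x, eF q f x ∂μ ≠ ⊤ →
      ∃ a : ℝ, ∫⁻ x, eF q (fun x => f x - a) x ∂μ ≠ ⊤ ∧
        ∫⁻ x, eF q (fun x => f x - a) x ∂μ ≤ ENNReal.ofReal C1 * ∫⁻ x, eG q f x ∂μ)
    (hS : ∀ g : Heis → ℝ, ContDiff ℝ 1 g → ∀ τ : ℝ, 0 < τ →
      ∫⁻ x, eF q g x ∂μ ≤ ENNReal.ofReal (τ ^ q) →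
      ∫⁻ x, eF q g x * ENNReal.ofReal (Real.log (|g x| / τ)) ∂μ ≤ ENNReal.ofReal C2 *
        ((∫⁻ x, eG q g x ∂μ) + ∫⁻ x, eF q g x ∂μ))
    (f : Heis → ℝ) (hf : ContDiff ℝ 1 f) (hG : Integrable (fun x => gradLen f x ^ q) μ) :
    ∫ x, |f x| ^ q * Real.log (|f x| ^ q / ∫ y, |f y| ^ q ∂μ) ∂μ
        ≤ (18 * C1 + 8 * (C2 * (1 + C1))) * ∫ x, gradLen f x ^ q ∂μ := by
  have hgl : ∀ x, 0 ≤ gradLen f x := fun x => Real.sqrt_nonneg _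
  have hR : 0 ≤ ∫ x, gradLen f x ^ q ∂μ := integral_nonneg fun x => Real.rpow_nonneg (hgl x) _
  have hRHS : 0 ≤ (18 * C1 + 8 * (C2 * (1 + C1))) * ∫ x, gradLen f x ^ q ∂μ := by positivity
  set I := ∫ y, |f y| ^ q ∂μ with hIdef
  have hI0 : 0 ≤ I := integral_nonneg fun x => by positivity
  rcases hI0.eq_or_lt with hI | hI
  · rw [← hI]; simpa using hRHS
  have hFi : Integrable (fun y => |f y| ^ q) μ := by
    by_contra hc
    rw [hIdef, integral_undef hc] at hI
    exact lt_irrefl _ hI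
  by_cases hLi : Integrable (fun x => |f x| ^ q * Real.log (|f x| ^ q / I)) μ
  swap
  · rw [integral_undef hLi]; exact hRHS
  have heF : ∀ (h : Heis → ℝ) x, eF q h x = ENNReal.ofReal (|h x| ^ q) := fun h x => enorm_rpow_eq hq0.le _
  have hfin : ∫⁻ x, eF q f x ∂μ ≠ ⊤ := by
    simp_rw [heF]
    rw [← ofReal_integral_eq_lintegral_ofReal hFi (Eventually.of_forall fun x => by positivity)]
    exact ENNReal.ofReal_ne_top
  have hGe : ∫⁻ x, eG q f x ∂μ = ENNReal.ofReal (∫ x, gradLen f x ^ q ∂μ) := by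
    rw [ofReal_integral_eq_lintegral_ofReal hG (Eventually.of_forall fun x => Real.rpow_nonneg (hgl x) _)]
    refine lintegral_congr fun x => ?_
    rw [eG, enorm_rpow_eq hq0.le, abs_of_nonneg (hgl x)]
  obtain ⟨a, hNfin, hNle⟩ := hP f hf hfin
  set g : Heis → ℝ := fun x => f x - a with hg
  have hgc : ContDiff ℝ 1 g := hf.sub contDiff_const
  set N := ∫⁻ x, eF q g x ∂μ with hN
  set τ := max |a| (N.toReal ^ (1 / q)) with hτdef
  have hnq : 0 ≤ N.toReal ^ (1 / q) := by positivity
  have hNq : (N.toReal ^ (1 / q)) ^ q = N.toReal := by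
    rw [← Real.rpow_mul ENNReal.toReal_nonneg, one_div_mul_cancel hq0.ne', Real.rpow_one]
  have hτ0 : 0 ≤ τ := (abs_nonneg a).trans (le_max_left _ _)
  have hτ : 0 < τ := by
    rcases hτ0.eq_or_lt with h | h
    swap
    · exact h
    exfalso
    have h1 : |a| ≤ 0 := by rw [h]; exact le_max_left _ _
    have h2 : N.toReal ^ (1 / q) ≤ 0 := by rw [h]; exact le_max_right _ _
    have h3 : N.toReal ^ (1 / q) = 0 := le_antisymm h2 hnq
    rw [h3, Real.zero_rpow hq0.ne'] at hNq
    have ha : a = 0 := abs_nonpos_iff.1 h1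
    have hNI : N = ENNReal.ofReal I := by
      rw [hN, hIdef, ofReal_integral_eq_lintegral_ofReal hFi (Eventually.of_forall fun x => by positivity)]
      refine lintegral_congr fun x => ?_
      rw [heF, hg]; simp [ha]
    rw [hNI, ENNReal.toReal_ofReal hI0] at hNq
    linarith
  have ht : 0 < τ ^ q := Real.rpow_pos_of_pos hτ q
  have hNt : N ≤ ENNReal.ofReal (τ ^ q) := by
    rw [← ENNReal.ofReal_toReal hNfin]
    refine ENNReal.ofReal_le_ofReal ?_
    rw [← hNq]
    exact Real.rpow_le_rpow hnq (le_max_right _ _) hq0.le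
  have hκ : ENNReal.ofReal (if |a| = τ then 0 else τ ^ q) ≤ N := by
    split_ifs with hc
    · simp
    · have : τ = N.toReal ^ (1 / q) := by
        rcases max_choice |a| (N.toReal ^ (1 / q)) with h | h
        · exact absurd h.symm hc
        · exact h
      rw [this, hNq, ENNReal.ofReal_toReal hNfin]
  have hSl := hS g hgc τ hτ hNt
  have hGg : ∫⁻ x, eG q g x ∂μ = ∫⁻ x, eG q f x ∂μ := by rw [hg, eG_sub_const]
  rw [hGg, ← hN] at hSl
  -- subtract the null part
  have hRi : Integrable (fun x => |f x| ^ q * (τ ^ q / I) - τ ^ q) μ :=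
    (hFi.mul_const _).sub (integrable_const _)
  have hR0 : ∫ x, (|f x| ^ q * (τ ^ q / I) - τ ^ q) ∂μ = 0 := by
    rw [integral_sub (hFi.mul_const _) (integrable_const _), integral_mul_const, ← hIdef]
    simp
    field_simp
    simp
  have hdiff := hLi.sub hRi
  have step1 : ∫ x, |f x| ^ q * Real.log (|f x| ^ q / I) ∂μ =
      ∫ x, (|f x| ^ q * Real.log (|f x| ^ q / I) - (|f x| ^ q * (τ ^ q / I) - τ ^ q)) ∂μ := by
    rw [integral_sub hLi hRi, hR0, sub_zero]
  have hFm : Measurable (eF q g) := measurable_eF q hgc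
  have hgm : Measurable g := hgc.continuous.measurable
  have hSm : Measurable (fun x => eF q g x * ENNReal.ofReal (Real.log (|g x| / τ))) :=
    hFm.mul (by fun_prop)
  have hFm9 : Measurable (fun x => 9 * eF q g x) := hFm.const_mul _
  have hSm8 : Measurable (fun x => 8 * (eF q g x * ENNReal.ofReal (Real.log (|g x| / τ)))) := hSm.const_mul _
  have step2 : ∫⁻ x, ENNReal.ofReal (|f x| ^ q * Real.log (|f x| ^ q / I) - (|f x| ^ q * (τ ^ q / I) - τ ^ q)) ∂μ ≤
      9 * N + 8 * (ENNReal.ofReal C2 * ((∫⁻ x, eG q f x ∂μ) + N)) + 9 * N := by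
    calc _ ≤ ∫⁻ x, (9 * eF q g x + 8 * (eF q g x * ENNReal.ofReal (Real.log (|g x| / τ))) +
          9 * ENNReal.ofReal (if |a| = τ then 0 else τ ^ q)) ∂μ := by
          refine lintegral_mono fun x => ?_
          have h1 := ent_split (show 0 ≤ |f x| ^ q by positivity) hI ht
          have h2 := ptwise (g := g x) hq0 hq2 hτ (le_max_left |a| _)
          rw [show a + g x = f x by simp [hg]] at h2
          refine (ENNReal.ofReal_le_ofReal (h1.trans h2)).trans (le_of_eq ?_)
          have hm : 0 ≤ max (Real.log (|g x| / τ)) 0 := le_max_right _ _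
          have hi : (0:ℝ) ≤ if |a| = τ then 0 else τ ^ q := by split_ifs <;> positivity
          have hgq : 0 ≤ |g x| ^ q := by positivity
          rw [ENNReal.ofReal_add (by positivity) (by positivity), ENNReal.ofReal_add (by positivity) (by positivity),
            ENNReal.ofReal_mul (by norm_num), ENNReal.ofReal_mul (by norm_num), ENNReal.ofReal_mul hgq,
            ENNReal.ofReal_mul (by norm_num), heF]
          simp only [ENNReal.ofReal_ofNat, ENNReal.ofReal_max, ENNReal.ofReal_zero]
          simp
      _ = 9 * N + 8 * (∫⁻ x, eF q g x * ENNReal.ofReal (Real.log (|g x| / τ)) ∂μ) +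
          9 * ENNReal.ofReal (if |a| = τ then 0 else τ ^ q) := by
          rw [lintegral_add_right _ measurable_const, lintegral_add_right _ hSm8, lintegral_const_mul _ hFm,
            lintegral_const_mul _ hSm, lintegral_const, measure_univ, mul_one]
      _ ≤ _ := by gcongr
  have step3 : 9 * N + 8 * (ENNReal.ofReal C2 * ((∫⁻ x, eG q f x ∂μ) + N)) + 9 * N ≤
      ENNReal.ofReal ((18 * C1 + 8 * (C2 * (1 + C1))) * ∫ x, gradLen f x ^ q ∂μ) := by
    rw [hGe] at hNle ⊢
    set R := ∫ x, gradLen f x ^ q ∂μ with hRdef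
    calc _ ≤ 9 * (ENNReal.ofReal C1 * ENNReal.ofReal R) +
          8 * (ENNReal.ofReal C2 * (ENNReal.ofReal R + ENNReal.ofReal C1 * ENNReal.ofReal R)) +
          9 * (ENNReal.ofReal C1 * ENNReal.ofReal R) := by gcongr
      _ = _ := by
        rw [show (9:ENNReal) = ENNReal.ofReal 9 by simp, show (8:ENNReal) = ENNReal.ofReal 8 by simp,
          ← ENNReal.ofReal_mul hC1.le, ← ENNReal.ofReal_add hR (by positivity), ← ENNReal.ofReal_mul hC2.le,
          ← ENNReal.ofReal_mul (by norm_num), ← ENNReal.ofReal_mul (by norm_num),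
          ← ENNReal.ofReal_add (by positivity) (by positivity), ← ENNReal.ofReal_add (by positivity) (by positivity)]
        congr 1; ring
  rw [step1]
  refine (integral_le_lint hdiff).trans ?_
  exact ENNReal.toReal_le_of_le_ofReal hRHS (step2.trans step3)

end

open MeasureTheory Real Filter
noncomputable section

theorem heisenberg_LSq (p q β : ℝ) (hp : 2 ≤ p) (hβ : 0 < β)
    (hpq : 1 / p + 1 / q = 1) :
    ∃ c : ℝ, 0 < c ∧ ∀ f : Heis → ℝ, ContDiff ℝ (⊤ : ℕ∞) f →
      Integrable (fun x => gradLen f x ^ q) (muP p β) →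
      ∫ x, |f x| ^ q * Real.log (|f x| ^ q / ∫ y, |f y| ^ q ∂(muP p β)) ∂(muP p β)
        ≤ c * ∫ x, gradLen f x ^ q ∂(muP p β) := by
  have hqne : q ≠ 0 := by
    rintro rfl
    have : 1 / p ≤ 1 / 2 := one_div_le_one_div_of_le (by norm_num) hp
    simp at hpq this
    rw [hpq] at hp
    norm_num at hp
  have hpq' : (p - 1) * q = p := by
    have hp0 : p ≠ 0 := by linarith
    field_simp at hpq
    linarith
  obtain ⟨hq1, hq2⟩ := q_facts hp hpq'
  have hq0 : 0 < q := by linarith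
  set Z := ∫ y : Heis, Real.exp (-β * ccNorm y ^ p) with hZdef
  have hmu : muP p β = (volume : Measure Heis).withDensity (dens p β Z) := rfl
  have hZ0 : 0 ≤ Z := integral_nonneg fun x => (Real.exp_pos _).le
  rcases hZ0.eq_or_lt with hZ | hZ
  · have hd : dens p β Z = 0 := by
      funext x
      simp [dens, ← hZ]
    refine ⟨1, one_pos, fun f _ _ => ?_⟩
    rw [hmu, hd, withDensity_zero]
    simp
  have hexpint : Integrable (fun y : Heis => Real.exp (-β * ccNorm y ^ p)) := by
    by_contra hc
    rw [hZdef, integral_undef hc] at hZ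
    exact lt_irrefl _ hZ
  have hmass : ∫⁻ x, dens p β Z x = 1 := by
    have h1 := ofReal_integral_eq_lintegral_ofReal (hexpint.div_const Z)
      (Eventually.of_forall fun x => div_nonneg (Real.exp_pos _).le hZ.le)
    rw [integral_div, ← hZdef, div_self hZ.ne', ENNReal.ofReal_one] at h1
    exact h1.symm
  have hρ := measurable_dens hp β Z
  haveI : IsProbabilityMeasure (muP p β) := by
    refine ⟨?_⟩
    rw [hmu, withDensity_apply _ MeasurableSet.univ, Measure.restrict_univ, hmass]
  have hl : ∀ F : Heis → ENNReal, Measurable F → ∫⁻ x, F x ∂(muP p β) = ∫⁻ x, dens p β Z x * F x := by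
    intro F hF
    rw [hmu, lintegral_withDensity_eq_lintegral_mul _ hρ hF]
    rfl
  obtain ⟨C1, hC1, hP⟩ := poincare hp hpq' hβ hZ hmass
  obtain ⟨C2, hC2, hS⟩ := slices hp hpq' hβ hZ
  refine ⟨18 * C1 + 8 * (C2 * (1 + C1)), by positivity, fun f hf hG => ?_⟩
  refine finish hq0 hq2 hC1 hC2 (muP p β) ?_ ?_ f (hf.of_le (by exact_mod_cast le_top)) hG
  · intro f hf hfin
    rw [hl _ (measurable_eF q hf)] at hfin
    obtain ⟨a, h1, h2⟩ := hP f hf hfin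
    have hm := measurable_eF q (hf.sub (contDiff_const (c := a)))
    refine ⟨a, ?_, ?_⟩
    · rw [hl _ hm]; exact h1
    · rw [hl _ hm, hl _ (measurable_eG q hf)]; exact h2
  · intro g hg τ hτ hN
    have hFm := measurable_eF q hg
    have hgm : Measurable g := hg.continuous.measurable
    have hSm : Measurable (fun x => eF q g x * ENNReal.ofReal (Real.log (|g x| / τ))) :=
      hFm.mul (by fun_prop)
    rw [hl _ hFm] at hN
    rw [hl _ hFm, hl _ (measurable_eG q hg), hl _ hSm]
    exact hS g hg τ hτ hN

end
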